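/- Let φ : S¹ → ℝ be a C^∞ function having exactly n local extremum points on the circle (n finite and positive), of which exactly s are absolute extrema. Then the following are equivalent: (i) every smooth extension of φ has a critical point in the closed unit disk B̄²; (ii) s > n/2 + 1. -/

import Mathlib

open scoped RealInnerProductSpace

noncomputable section

abbrev E2 : Type := EuclideanSpace ℝ (Fin 2)

/-- The point (cos t, sin t) on the unit circle in ℝ². -/
def sphPt (t : ℝ) : E2 := (EuclideanSpace.equiv (Fin 2) ℝ).symm ![Real.cos t, Real.sin t]

/-!
Extensions without critical points. Suppose `f` extends `φ` and has no critical point in the disk.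
The disk is simply connected, so the gradient of `f` has a continuous angle `α` there, and
`ψ t = α - t`, the angle of the gradient relative to the outer normal, loses `2 π` over one turn.
The tangential derivative of `f` vanishes at the `n = 2 N` local extrema, where `ψ` is therefore a
multiple of `π`; on the arcs in between the sign of `sin ψ` is prescribed, so `ψ` can cross
multiples of `π` only in one way. The maximum principle makes the radial derivative nonnegative at
the absolute maxima and nonpositive at the absolute minima. Counting parities, at most `N + 1` of
the extrema can be absolute.

Conversely, let at most `N + 1` extrema be absolute. If `n > 2`, some two consecutive extrema can be
cancelled across an annulus without critical points so that on the inner circle `n - 2` extrema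
remain, of which at most `N` are absolute. A function with two extrema is joined to a linear one on
a smaller disk. Annuli fit together if the radial slopes on the two sides of their common circle
have the same sign at the critical points on this circle; so the induction keeps track of the signs
of the outward slopes at the extrema.
-/

section

open Set Filter Topology Function Real
open scoped ContDiff

/-! ### Smooth steps and ramps -/

/-- `P` is a smooth step from `0` on `(-∞, a]` to `1` on `[b, ∞)` that increases with positive
derivative in between. These are the building blocks of all functions on the circle constructed
below. -/
structure IsSmoothStep (P : ℝ → ℝ) (a b : ℝ) : Prop where
  contDiff : ContDiff ℝ ∞ P
  eq_zero : ∀ x ≤ a, P x = 0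
  eq_one : ∀ x, b ≤ x → P x = 1
  monotone : Monotone P
  deriv_pos : ∀ x ∈ Ioo a b, 0 < deriv P x

namespace IsSmoothStep

variable {P : ℝ → ℝ} {a b x : ℝ}

theorem differentiableAt (h : IsSmoothStep P a b) : DifferentiableAt ℝ P x :=
  h.contDiff.differentiable (by simp) x

theorem nonneg (h : IsSmoothStep P a b) : 0 ≤ P x := by
  rw [← h.eq_zero (min x a) (min_le_right _ _)]
  exact h.monotone (min_le_left _ _)

theorem le_one (h : IsSmoothStep P a b) : P x ≤ 1 := by
  rw [← h.eq_one (max x b) (le_max_right _ _)]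
  exact h.monotone (le_max_left _ _)

theorem strictMonoOn (h : IsSmoothStep P a b) : StrictMonoOn P (Icc a b) :=
  strictMonoOn_of_deriv_pos (convex_Icc a b) h.contDiff.continuous.continuousOn
    (by simpa only [interior_Icc] using h.deriv_pos)

theorem pos (h : IsSmoothStep P a b) (hx : x ∈ Ioo a b) : 0 < P x := by
  rw [← h.eq_zero a le_rfl]
  exact h.strictMonoOn ⟨le_rfl, (hx.1.trans hx.2).le⟩ (Ioo_subset_Icc_self hx) hx.1

theorem lt_one (h : IsSmoothStep P a b) (hx : x ∈ Ioo a b) : P x < 1 := by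
  rw [← h.eq_one b le_rfl]
  exact h.strictMonoOn (Ioo_subset_Icc_self hx) ⟨(hx.1.trans hx.2).le, le_rfl⟩ hx.2

theorem deriv_eq_zero_of_le (h : IsSmoothStep P a b) (hx : x ≤ a) : deriv P x = 0 :=
  IsLocalMin.deriv_eq_zero (Eventually.of_forall fun y => by
    rw [h.eq_zero x hx]; exact h.nonneg)

theorem deriv_eq_zero_of_ge (h : IsSmoothStep P a b) (hx : b ≤ x) : deriv P x = 0 :=
  IsLocalMax.deriv_eq_zero (Eventually.of_forall fun y => by
    rw [h.eq_one x hx]; exact h.le_one)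

theorem pow (h : IsSmoothStep P a b) {k : ℕ} (hk : k ≠ 0) :
    IsSmoothStep (fun x => P x ^ k) a b where
  contDiff := h.contDiff.pow k
  eq_zero x hx := by simp only [h.eq_zero x hx, zero_pow hk]
  eq_one x hx := by simp only [h.eq_one x hx, one_pow]
  monotone x y hxy := pow_le_pow_left₀ h.nonneg (h.monotone hxy) k
  deriv_pos x hx := by
    rw [deriv_fun_pow h.differentiableAt]
    have := h.pos hx
    have := h.deriv_pos x hx
    positivity

theorem reflect (h : IsSmoothStep P a b) : IsSmoothStep (fun x => 1 - P (-x)) (-b) (-a) where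
  contDiff := contDiff_const.sub (h.contDiff.comp contDiff_neg)
  eq_zero x hx := by simp only [h.eq_one (-x) (by linarith), sub_self]
  eq_one x hx := by simp only [h.eq_zero (-x) (by linarith), sub_zero]
  monotone x y hxy := sub_le_sub_left (h.monotone (neg_le_neg hxy)) 1
  deriv_pos x hx := by
    rw [deriv_const_sub, deriv_comp_neg, neg_neg]
    exact h.deriv_pos _ ⟨by linarith [hx.2], by linarith [hx.1]⟩

end IsSmoothStep

theorem hasDerivAt_expNegInvGlue (x : ℝ) :
    HasDerivAt expNegInvGlue (x⁻¹ ^ 2 * expNegInvGlue x) x := by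
  simpa using expNegInvGlue.hasDerivAt_polynomial_eval_inv_mul 1 x

theorem deriv_smoothTransition_pos {x : ℝ} (hx : x ∈ Ioo 0 1) : 0 < deriv smoothTransition x := by
  have hnum := hasDerivAt_expNegInvGlue x
  have hrefl := (hasDerivAt_expNegInvGlue (1 - x)).comp_const_sub 1 x
  have hquot := hnum.div (hnum.add hrefl) (smoothTransition.pos_denom x).ne'
  have hE := expNegInvGlue.pos_of_pos hx.1
  have hE' := expNegInvGlue.pos_of_pos (sub_pos.2 hx.2)
  have hinv : 0 < x⁻¹ := inv_pos.2 hx.1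
  have hinv' : 0 < (1 - x)⁻¹ := inv_pos.2 (sub_pos.2 hx.2)
  have hderiv : deriv smoothTransition x = _ := hquot.deriv
  rw [hderiv]
  refine div_pos ?_ (pow_pos (smoothTransition.pos_denom x) 2)
  calc (0 : ℝ) < (x⁻¹ ^ 2 + (1 - x)⁻¹ ^ 2) * (expNegInvGlue x * expNegInvGlue (1 - x)) := by
        positivity
    _ = _ := by simp only [Pi.add_apply]; ring

theorem smoothTransition_one_sub (x : ℝ) : smoothTransition (1 - x) = 1 - smoothTransition x := by
  have := (smoothTransition.pos_denom x).ne'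
  rw [smoothTransition, smoothTransition, sub_sub_cancel, add_comm (expNegInvGlue (1 - x))]
  field_simp
  ring

/-- The standard smooth step from `a` to `b`; it is only meaningful for `a < b`. -/
def smoothStep (a b x : ℝ) : ℝ := smoothTransition ((x - a) / (b - a))

theorem isSmoothStep_smoothStep {a b : ℝ} (hab : a < b) : IsSmoothStep (smoothStep a b) a b := by
  have hba : 0 < b - a := sub_pos.2 hab
  refine ⟨smoothTransition.contDiff.comp (by fun_prop), fun x hx => ?_, fun x hx => ?_,
    fun x y hxy => ?_, fun x hx => ?_⟩
  · exact smoothTransition.zero_of_nonpos (div_nonpos_of_nonpos_of_nonneg (by linarith) hba.le)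
  · exact smoothTransition.one_of_one_le ((one_le_div hba).2 (by linarith))
  · exact smoothTransition.monotone (by gcongr)
  · have hmem : (x - a) / (b - a) ∈ Ioo (0 : ℝ) 1 :=
      ⟨div_pos (sub_pos.2 hx.1) hba, (div_lt_one hba).2 (by linarith [hx.2])⟩
    have haffine : HasDerivAt (fun y => (y - a) / (b - a)) (1 / (b - a)) x :=
      ((hasDerivAt_id x).sub_const a).div_const _
    have hstep := (smoothTransition.contDiff (n := 1)).differentiable one_ne_zero
      ((x - a) / (b - a)) |>.hasDerivAt.comp x haffine
    have hderiv : deriv (smoothStep a b) x = _ := hstep.deriv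
    rw [hderiv]
    exact mul_pos (deriv_smoothTransition_pos hmem) (one_div_pos.2 hba)

theorem exists_isSmoothStep_apply_lt {a b c e : ℝ} (hc : c ∈ Ioo a b) (he : 0 < e) :
    ∃ P, IsSmoothStep P a b ∧ P c < e := by
  have hstep := isSmoothStep_smoothStep (hc.1.trans hc.2)
  obtain ⟨k, hk⟩ := exists_pow_lt_of_lt_one he (hstep.lt_one hc)
  exact ⟨_, hstep.pow k.succ_ne_zero,
    (pow_le_pow_of_le_one hstep.nonneg hstep.le_one k.le_succ).trans_lt hk⟩

theorem exists_isSmoothStep_lt_apply {a b c e : ℝ} (hc : c ∈ Ioo a b) (he : 0 < e) :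
    ∃ P, IsSmoothStep P a b ∧ 1 - e < P c := by
  have hneg : -c ∈ Ioo (-b) (-a) := ⟨neg_lt_neg hc.2, neg_lt_neg hc.1⟩
  obtain ⟨P, hP, hPc⟩ := exists_isSmoothStep_apply_lt hneg he
  exact ⟨fun x => 1 - P (-x), by simpa only [neg_neg] using hP.reflect, by linarith⟩

theorem smoothStep_neg {d : ℝ} (hd : 0 < d) (x : ℝ) :
    smoothStep (-d) d (-x) = 1 - smoothStep (-d) d x := by
  rw [smoothStep, smoothStep, ← smoothTransition_one_sub]
  congr 1
  field_simp
  ring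

theorem integral_smoothStep_symm {d : ℝ} (hd : 0 < d) :
    ∫ x in (-d)..d, smoothStep (-d) d x = d := by
  have hint := (isSmoothStep_smoothStep (neg_lt_self hd)).contDiff.continuous.intervalIntegrable
    (μ := MeasureTheory.volume) (-d) d
  have hrefl : ∫ x in (-d)..d, smoothStep (-d) d (-x) = ∫ x in (-d)..d, smoothStep (-d) d x := by
    rw [intervalIntegral.integral_comp_neg, neg_neg]
  simp only [smoothStep_neg hd] at hrefl
  rw [intervalIntegral.integral_sub intervalIntegrable_const hint,
    intervalIntegral.integral_const, smul_eq_mul] at hrefl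
  linarith

/-- `m` is a smoothing of `s ↦ max s 0` that differs from it only on `(-d, d)` and whose slope lies
between `0` and `1`. It is used to smooth creases. -/
structure IsSmoothRamp (m : ℝ → ℝ) (d : ℝ) : Prop where
  contDiff : ContDiff ℝ ∞ m
  eq_zero : ∀ s ≤ -d, m s = 0
  eq_self : ∀ s, d ≤ s → m s = s
  deriv_mem : ∀ s, deriv m s ∈ Icc 0 1

namespace IsSmoothRamp

variable {m : ℝ → ℝ} {d s : ℝ}

theorem monotone (h : IsSmoothRamp m d) : Monotone m :=
  monotone_of_deriv_nonneg (h.contDiff.differentiable (by simp)) fun s => (h.deriv_mem s).1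

theorem mem_Icc (h : IsSmoothRamp m d) (hs : s ∈ Icc (-d) d) : m s ∈ Icc 0 d :=
  ⟨(h.eq_zero _ le_rfl).symm.le.trans (h.monotone hs.1),
    (h.monotone hs.2).trans (h.eq_self _ le_rfl).le⟩

theorem deriv_eq_one (h : IsSmoothRamp m d) (hs : d < s) : deriv m s = 1 := by
  have heq : m =ᶠ[𝓝 s] id := by
    filter_upwards [lt_mem_nhds hs] with y hy using h.eq_self y hy.le
  rw [heq.deriv_eq, deriv_id]

end IsSmoothRamp

theorem exists_isSmoothRamp {d : ℝ} (hd : 0 < d) : ∃ m, IsSmoothRamp m d := by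
  have hP := isSmoothStep_smoothStep (neg_lt_self hd)
  have hint : ∀ u v, IntervalIntegrable (smoothStep (-d) d) MeasureTheory.volume u v :=
    hP.contDiff.continuous.intervalIntegrable
  have hderiv : ∀ s, HasDerivAt (fun s => ∫ x in (-d)..s, smoothStep (-d) d x)
      (smoothStep (-d) d s) s := fun s =>
    (hP.contDiff.continuous.integral_hasStrictDerivAt (-d) s).hasDerivAt
  refine ⟨_, contDiff_infty_iff_deriv.2 ⟨fun s => (hderiv s).differentiableAt, ?_⟩,
    fun s hs => ?_, fun s hs => ?_, fun s => (hderiv s).deriv ▸ ⟨hP.nonneg, hP.le_one⟩⟩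
  · rw [funext fun s => (hderiv s).deriv]
    exact hP.contDiff
  · refine intervalIntegral.integral_zero_ae (Eventually.of_forall fun x hx => hP.eq_zero x ?_)
    rw [uIoc_of_ge hs] at hx
    exact hx.2
  · have hone : ∫ x in d..s, smoothStep (-d) d x = ∫ _ in d..s, (1 : ℝ) :=
      intervalIntegral.integral_congr fun x hx => hP.eq_one x (uIcc_of_le hs ▸ hx).1
    rw [← intervalIntegral.integral_add_adjacent_intervals (hint (-d) d) (hint d s),
      integral_smoothStep_symm hd, hone, intervalIntegral.integral_const, smul_eq_mul]
    ring

/-! ### Critical-point-free functions in polar coordinates -/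

/-- A smooth function without critical points on the disk of radius `R`, written in the polar
coordinates `(r, x)`: it is linear on the unit disk, has boundary values `g` and is affine in `r`
with slope `v` near the boundary. Linearity near the centre takes care of the singularity of polar
coordinates, and affinity near the boundary of attaching a further annulus. -/
structure RegularPolarExtension (g v : ℝ → ℝ) where
  toFun : ℝ × ℝ → ℝ
  R : ℝ
  A : ℝ
  B : ℝ
  μ : ℝ
  ε : ℝ
  one_lt_R : 1 < R
  B_pos : 0 < B
  ε_pos : 0 < ε
  contDiff : ContDiff ℝ ∞ toFun
  periodic : ∀ r, Periodic (fun x => toFun (r, x)) (2 * π)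
  eq_linear : ∀ r ≤ 1, ∀ x, toFun (r, x) = A + B * r * cos (x - μ)
  eq_affine : ∀ r, R - ε < r → ∀ x, toFun (r, x) = g x + (r - R) * v x
  fderiv_ne_zero : ∀ r ∈ Icc 1 R, ∀ x, fderiv ℝ toFun (r, x) ≠ 0

theorem periodic_deriv {E : Type*} [NormedAddCommGroup E] [NormedSpace ℝ E] {f : ℝ → E} {p : ℝ}
    (hf : Periodic f p) : Periodic (deriv f) p := fun x => by
  rw [← deriv_comp_add_const, funext hf]

theorem eq_zero_of_fderiv_prod_eq_zero {F : ℝ × ℝ → ℝ} {r x a b : ℝ}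
    (hF : DifferentiableAt ℝ F (r, x)) (hzero : fderiv ℝ F (r, x) = 0)
    (ha : HasDerivAt (fun s => F (s, x)) a r) (hb : HasDerivAt (fun y => F (r, y)) b x) :
    a = 0 ∧ b = 0 := by
  have hF' : HasFDerivAt F 0 (r, x) := hzero ▸ hF.hasFDerivAt
  have hr := hF'.comp_hasDerivAt r ((hasDerivAt_id r).prodMk (hasDerivAt_const r x))
  have hx := hF'.comp_hasDerivAt x ((hasDerivAt_const x r).prodMk (hasDerivAt_id x))
  exact ⟨ha.unique hr, hb.unique hx⟩

theorem contDiff_cos_sub (μ : ℝ) : ContDiff ℝ ∞ fun x => cos (x - μ) :=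
  Real.contDiff_cos.comp (contDiff_id.sub contDiff_const)

theorem hasDerivAt_cos_sub (μ x : ℝ) : HasDerivAt (fun y => cos (y - μ)) (-sin (x - μ)) x :=
  (Real.hasDerivAt_cos _).comp_sub_const x μ

theorem periodic_cos_sub (μ : ℝ) : Periodic (fun x => cos (x - μ)) (2 * π) :=
  Real.cos_periodic.sub_const μ

namespace RegularPolarExtension

variable {g v : ℝ → ℝ}

/-- The linear function `A + B r cos (x - μ)` on the disk of radius `2`. -/
def linear (A μ : ℝ) {B : ℝ} (hB : 0 < B) :
    RegularPolarExtension (fun x => A + 2 * B * cos (x - μ)) (fun x => B * cos (x - μ)) where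
  toFun p := A + B * p.1 * cos (p.2 - μ)
  R := 2
  A := A
  B := B
  μ := μ
  ε := 1
  one_lt_R := one_lt_two
  B_pos := hB
  ε_pos := one_pos
  contDiff := contDiff_const.add ((contDiff_const.mul contDiff_fst).mul
    ((contDiff_cos_sub μ).comp contDiff_snd))
  periodic r x := by simp only [periodic_cos_sub μ x]
  eq_linear _ _ _ := rfl
  eq_affine r _ x := by ring
  fderiv_ne_zero r hr x hzero := by
    have hdiff : Differentiable ℝ fun p : ℝ × ℝ => A + B * p.1 * cos (p.2 - μ) := by fun_prop
    have hradial : HasDerivAt (fun s => A + B * s * cos (x - μ)) (B * 1 * cos (x - μ)) r :=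
      (((hasDerivAt_id r).const_mul B).mul_const _).const_add A
    have hangular : HasDerivAt (fun y => A + B * r * cos (y - μ)) (B * r * -sin (x - μ)) x :=
      ((hasDerivAt_cos_sub μ x).const_mul _).const_add A
    obtain ⟨hcos, hsin⟩ := eq_zero_of_fderiv_prod_eq_zero (hdiff _) hzero hradial hangular
    have hr0 : r ≠ 0 := by linarith [hr.1]
    have hcos' : cos (x - μ) = 0 := by simpa [hB.ne'] using hcos
    have hsin' : sin (x - μ) = 0 := by simpa [hB.ne', hr0] using hsin
    simpa [hcos', hsin'] using Real.sin_sq_add_cos_sq (x - μ)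

variable (F : RegularPolarExtension g v)

include F

theorem contDiff_circle (r : ℝ) : ContDiff ℝ ∞ fun x => F.toFun (r, x) :=
  F.contDiff.comp (contDiff_const.prodMk contDiff_id)

theorem boundary_eq : g = fun x => F.toFun (F.R, x) := by
  funext x
  rw [F.eq_affine _ (sub_lt_self _ F.ε_pos)]
  ring

theorem slope_eq : v = fun x => (F.toFun (F.R + 1, x) - F.toFun (F.R, x)) := by
  funext x
  rw [F.eq_affine _ (sub_lt_self _ F.ε_pos), F.eq_affine _ (by linarith [F.ε_pos])]
  ring

theorem contDiff_boundary : ContDiff ℝ ∞ g := F.boundary_eq ▸ F.contDiff_circle _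

theorem periodic_boundary : Periodic g (2 * π) := F.boundary_eq ▸ F.periodic _

theorem contDiff_slope : ContDiff ℝ ∞ v :=
  F.slope_eq ▸ (F.contDiff_circle _).sub (F.contDiff_circle _)

theorem periodic_slope : Periodic v (2 * π) :=
  F.slope_eq ▸ (F.periodic _).sub (F.periodic _)

end RegularPolarExtension

/-- The values `G` at `r = R`, continued inwards with radial slope `v` and outwards with radial
slope `u`; the ramp `m` smooths the crease at `r = R`. -/
def collar (G v u m : ℝ → ℝ) (R : ℝ) (p : ℝ × ℝ) : ℝ :=
  G p.2 + (p.1 - R) * v p.2 + m (p.1 - R) * (u p.2 - v p.2)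

section Collar

variable {G v u m : ℝ → ℝ}

theorem contDiff_collar (hG : ContDiff ℝ ∞ G) (hv : ContDiff ℝ ∞ v) (hu : ContDiff ℝ ∞ u)
    (hm : ContDiff ℝ ∞ m) (R : ℝ) : ContDiff ℝ ∞ (collar G v u m R) := by
  have hr : ContDiff ℝ ∞ fun p : ℝ × ℝ => p.1 - R := contDiff_fst.sub contDiff_const
  exact ((hG.comp contDiff_snd).add (hr.mul (hv.comp contDiff_snd))).add
    ((hm.comp hr).mul ((hu.comp contDiff_snd).sub (hv.comp contDiff_snd)))

theorem collar_partials_eq_zero (hG : ContDiff ℝ ∞ G) (hv : ContDiff ℝ ∞ v) (hu : ContDiff ℝ ∞ u)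
    (hm : ContDiff ℝ ∞ m) {R r x : ℝ} (hzero : fderiv ℝ (collar G v u m R) (r, x) = 0) :
    v x + deriv m (r - R) * (u x - v x) = 0 ∧
      deriv G x + (r - R) * deriv v x + m (r - R) * (deriv u x - deriv v x) = 0 := by
  have hderiv {f : ℝ → ℝ} (hf : ContDiff ℝ ∞ f) (y : ℝ) : HasDerivAt f (deriv f y) y :=
    (hf.differentiable (by simp) y).hasDerivAt
  have hradial : HasDerivAt (fun s => G x + (s - R) * v x + m (s - R) * (u x - v x))
      (1 * v x + deriv m (r - R) * (u x - v x)) r :=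
    ((((hasDerivAt_id r).sub_const R).mul_const (v x)).const_add (G x)).add
      (((hderiv hm (r - R)).comp_sub_const r R).mul_const _)
  have hangular : HasDerivAt (fun y => G y + (r - R) * v y + m (r - R) * (u y - v y))
      (deriv G x + (r - R) * deriv v x + m (r - R) * (deriv u x - deriv v x)) x :=
    ((hderiv hG x).add ((hderiv hv x).const_mul _)).add
      (((hderiv hu x).sub (hderiv hv x)).const_mul _)
  rw [one_mul] at hradial
  exact eq_zero_of_fderiv_prod_eq_zero
    ((contDiff_collar hG hv hu hm R).differentiable (by simp) _) hzero hradial hangular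

theorem convexCombination_ne_zero {a b q : ℝ} (hab : 0 < a * b) (hq : q ∈ Icc 0 1) :
    a + q * (b - a) ≠ 0 := by
  intro h
  have hpos : (1 - q) • (a * a) + q • (a * b) ∈ Ioi (0 : ℝ) :=
    convex_Ioi 0 (mul_self_pos.2 (left_ne_zero_of_mul hab.ne')) hab (sub_nonneg.2 hq.2) hq.1
      (sub_add_cancel 1 q)
  have hfactor : (1 - q) • (a * a) + q • (a * b) = a * (a + q * (b - a)) := by
    simp only [smul_eq_mul]
    ring
  rw [hfactor, h, mul_zero] at hpos
  exact lt_irrefl (0 : ℝ) hpos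

theorem eventually_collar_partials_ne_zero {p : ℝ} (hp : 0 < p)
    (hG : ContDiff ℝ ∞ G) (hv : ContDiff ℝ ∞ v) (hu : ContDiff ℝ ∞ u)
    (hGp : Periodic G p) (hvp : Periodic v p) (hup : Periodic u p)
    (hcrit : ∀ x, deriv G x = 0 → 0 < v x * u x) :
    ∀ᶠ z : ℝ × ℝ in 𝓝 0, ∀ x, ∀ q ∈ Icc (0 : ℝ) 1, ¬ (v x + q * (u x - v x) = 0 ∧
      deriv G x + z.1 * deriv v x + z.2 * (deriv u x - deriv v x) = 0) := by
  have hG' : Continuous (deriv G) := hG.continuous_deriv (by simp)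
  have hv' : Continuous (deriv v) := hv.continuous_deriv (by simp)
  have hu' : Continuous (deriv u) := hu.continuous_deriv (by simp)
  have hvc := hv.continuous
  have huc := hu.continuous
  have hcompact : ∀ᶠ z : ℝ × ℝ in 𝓝 0, ∀ y ∈ Icc 0 p ×ˢ Icc (0 : ℝ) 1,
      (v y.1 + y.2 * (u y.1 - v y.1),
        deriv G y.1 + z.1 * deriv v y.1 + z.2 * (deriv u y.1 - deriv v y.1)) ≠ (0, 0) := by
    refine (isCompact_Icc.prod isCompact_Icc).eventually_forall_of_forall_eventually
      fun y hy => ContinuousAt.eventually_ne (by fun_prop) fun h => ?_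
    simp only [Prod.mk.injEq, Prod.fst_zero, Prod.snd_zero, zero_mul, add_zero] at h
    exact convexCombination_ne_zero (hcrit _ h.2) hy.2 h.1
  filter_upwards [hcompact] with z hz x q hq hzero
  have hperiodic : Periodic (fun x => (v x + q * (u x - v x),
      deriv G x + z.1 * deriv v x + z.2 * (deriv u x - deriv v x))) p := fun x => by
    simp only [hvp x, hup x, periodic_deriv hGp x, periodic_deriv hvp x, periodic_deriv hup x]
  obtain ⟨y, hy, hxy⟩ := hperiodic.exists_mem_Ico₀ hp x
  refine hz (y, q) ⟨Ico_subset_Icc_self hy, hq⟩ ?_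
  rw [← hxy, hzero.1, hzero.2]

end Collar

theorem ite_lt_eventuallyEq_left {X Y : Type*} [TopologicalSpace X] {f g : X → Y} {τ : X → ℝ}
    {b : ℝ} {x : X} (hτ : Continuous τ) (hx : τ x < b) :
    (fun y => if τ y < b then f y else g y) =ᶠ[𝓝 x] f := by
  filter_upwards [hτ.continuousAt.eventually_lt_const hx] with y hy using if_pos hy

theorem ite_lt_eventuallyEq_right {X Y : Type*} [TopologicalSpace X] {f g : X → Y} {τ : X → ℝ}
    {a b : ℝ} {x : X} (hτ : Continuous τ) (hfg : ∀ y, a < τ y → τ y < b → f y = g y)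
    (hx : a < τ x) : (fun y => if τ y < b then f y else g y) =ᶠ[𝓝 x] g := by
  filter_upwards [hτ.continuousAt.eventually_const_lt hx] with y hy
  split_ifs with hyb
  exacts [hfg y hy hyb, rfl]

theorem contDiff_ite_lt {E F : Type*} [NormedAddCommGroup E] [NormedSpace ℝ E]
    [NormedAddCommGroup F] [NormedSpace ℝ F] {n : WithTop ℕ∞} {f g : E → F} {τ : E → ℝ} {a b : ℝ}
    (hf : ContDiff ℝ n f) (hg : ContDiff ℝ n g) (hτ : Continuous τ) (hab : a < b)
    (hfg : ∀ x, a < τ x → τ x < b → f x = g x) :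
    ContDiff ℝ n fun x => if τ x < b then f x else g x := by
  refine contDiff_iff_contDiffAt.2 fun x => ?_
  rcases lt_or_ge (τ x) b with hx | hx
  · exact hf.contDiffAt.congr_of_eventuallyEq (ite_lt_eventuallyEq_left hτ hx)
  · exact hg.contDiffAt.congr_of_eventuallyEq
      (ite_lt_eventuallyEq_right hτ hfg (hab.trans_le hx))

theorem collar_fderiv_ne_zero {G g v m : ℝ → ℝ} {d R : ℝ} (hG : ContDiff ℝ ∞ G)
    (hg : ContDiff ℝ ∞ g) (hv : ContDiff ℝ ∞ v) (hd : 0 ≤ d) (hm : IsSmoothRamp m d)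
    (hcrease : ∀ s ∈ Icc (-d) d, ∀ t ∈ Icc 0 d, ∀ x, ∀ q ∈ Icc (0 : ℝ) 1,
      ¬ (v x + q * (g x - G x - v x) = 0 ∧
        deriv G x + s * deriv v x + t * (deriv (fun x => g x - G x) x - deriv v x) = 0))
    (heq : ∀ x, g x = G x → 0 < deriv G x * deriv g x) {r : ℝ} (hr : r ∈ Icc (R - d) (R + 1))
    (x : ℝ) : fderiv ℝ (collar G v (fun x => g x - G x) m R) (r, x) ≠ 0 := by
  intro hzero
  obtain ⟨hradial, hangular⟩ := collar_partials_eq_zero hG hv (hg.sub hG) hm.contDiff hzero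
  rcases le_or_gt r (R + d) with hrd | hrd
  · have hs : r - R ∈ Icc (-d) d := ⟨by linarith [hr.1], by linarith⟩
    exact hcrease _ hs _ (hm.mem_Icc hs) x _ (hm.deriv_mem _) ⟨hradial, hangular⟩
  · rw [hm.deriv_eq_one (by linarith), one_mul, add_sub_cancel] at hradial
    rw [hm.eq_self _ (by linarith), deriv_fun_sub (hg.differentiable (by simp) x)
      (hG.differentiable (by simp) x)] at hangular
    refine convexCombination_ne_zero (heq x (sub_eq_zero.1 hradial))
      (q := r - R) ⟨by linarith, by linarith [hr.2]⟩ ?_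
    linear_combination hangular

/-- The key construction: to a regular function with boundary values `G` one attaches an annulus
across which the values change affinely from `G` to `g`. The slopes `v` and `g - G` on the two
sides of the crease must agree in sign at the critical points of `G`. -/
theorem RegularPolarExtension.nonempty_attach {G v g : ℝ → ℝ} (F : RegularPolarExtension G v)
    (hg : ContDiff ℝ ∞ g) (hper : Periodic g (2 * π))
    (hcrit : ∀ x, deriv G x = 0 → 0 < v x * (g x - G x))
    (heq : ∀ x, g x = G x → 0 < deriv G x * deriv g x) :
    Nonempty (RegularPolarExtension g (fun x => g x - G x)) := by
  have hG := F.contDiff_boundary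
  have hv := F.contDiff_slope
  obtain ⟨δ, hδ, hcrease⟩ := Metric.eventually_nhds_iff.1 <|
    eventually_collar_partials_ne_zero two_pi_pos hG hv (hg.sub hG) F.periodic_boundary
      F.periodic_slope (hper.sub F.periodic_boundary) hcrit
  obtain ⟨d, hd, hdlt⟩ : ∃ d, 0 < d ∧ d < min (min δ 1) (min F.ε (F.R - 1)) :=
    exists_between (by simp [hδ, F.ε_pos, F.one_lt_R])
  obtain ⟨⟨hdδ, hd1⟩, hdε, hdR⟩ := by simpa only [lt_min_iff] using hdlt
  obtain ⟨m, hm⟩ := exists_isSmoothRamp hd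
  set C := collar G v (fun x => g x - G x) m F.R with hC
  have hC_inner (p : ℝ × ℝ) (hp : F.R - F.ε < p.1) (hp' : p.1 < F.R - d) : F.toFun p = C p := by
    rw [F.eq_affine p.1 hp p.2, hC, collar, hm.eq_zero _ (by linarith)]
    ring
  have hC_ne_zero {r : ℝ} (hr : r ∈ Icc (F.R - d) (F.R + 1)) (x : ℝ) : fderiv ℝ C (r, x) ≠ 0 :=
    collar_fderiv_ne_zero hG hg hv hd.le hm (fun s hs t ht x q hq => hcrease (y := (s, t)) (by
      simpa [Prod.dist_eq, abs_lt] using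
        ⟨⟨by linarith [hs.1], by linarith [hs.2]⟩, by linarith [ht.1], by linarith [ht.2]⟩) x q hq)
      heq hr x
  have hsmooth : ContDiff ℝ ∞ fun p => if p.1 < F.R - d then F.toFun p else C p :=
    contDiff_ite_lt F.contDiff (contDiff_collar hG hv (hg.sub hG) hm.contDiff F.R)
      continuous_fst (by linarith) hC_inner
  refine ⟨⟨fun p => if p.1 < F.R - d then F.toFun p else C p, F.R + 1, F.A, F.B, F.μ, 1 - d,
    by linarith [F.one_lt_R], F.B_pos, by linarith, hsmooth, fun r x => ?_, fun r hr x => ?_,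
    fun r hr x => ?_, fun r hr x => ?_⟩⟩
  · simp only [hC, collar, F.periodic r x, F.periodic_boundary x, F.periodic_slope x, hper x]
  · rw [if_pos (by linarith), F.eq_linear r hr]
  · rw [if_neg (by linarith), hC, collar, hm.eq_self _ (by linarith)]
    ring
  · rcases lt_or_ge r (F.R - d) with hrd | hrd
    · rw [(ite_lt_eventuallyEq_left continuous_fst hrd).fderiv_eq]
      exact F.fderiv_ne_zero r ⟨hr.1, by linarith⟩ x
    · have hrε : F.R - F.ε < (r, x).1 := by simp only; linarith
      rw [(ite_lt_eventuallyEq_right continuous_fst hC_inner hrε).fderiv_eq]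
      exact hC_ne_zero ⟨hrd, hr.2⟩ x

/-! ### From polar coordinates to the plane -/

/-- The identification of the Euclidean plane with `ℂ`. -/
abbrev planeToComplex : E2 ≃ₗᵢ[ℝ] ℂ := Complex.orthonormalBasisOneI.repr.symm

theorem planeToComplex_sphPt (t : ℝ) : planeToComplex (sphPt t) = Complex.exp (t * Complex.I) := by
  rw [Complex.orthonormalBasisOneI_repr_symm_apply, Complex.exp_mul_I]
  simp [sphPt]

theorem norm_sphPt (t : ℝ) : ‖sphPt t‖ = 1 := by
  rw [← planeToComplex.norm_map, planeToComplex_sphPt, Complex.norm_exp_ofReal_mul_I]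

theorem inner_sphPt_sphPt (s t : ℝ) : ⟪sphPt s, sphPt t⟫ = cos (t - s) := by
  simp [sphPt, EuclideanSpace.inner_eq_star_dotProduct, cos_sub]

theorem sphPt_eq (t : ℝ) : sphPt t = planeToComplex.symm (Complex.exp (t * Complex.I)) := by
  rw [← planeToComplex_sphPt, LinearIsometryEquiv.symm_apply_apply]

theorem contDiff_sphPt : ContDiff ℝ ∞ sphPt := by
  rw [funext sphPt_eq]
  exact planeToComplex.symm.contDiff.comp
    ((Complex.ofRealCLM.contDiff.mul contDiff_const).cexp)

theorem hasDerivAt_sphPt (t : ℝ) : HasDerivAt sphPt (sphPt (t + π / 2)) t := by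
  have hexp : HasDerivAt (fun s : ℝ => Complex.exp (s * Complex.I))
      (Complex.exp (t * Complex.I) * (1 * Complex.I)) t :=
    ((Complex.ofRealCLM.hasDerivAt (x := t)).mul_const Complex.I).cexp
  have hcomp := planeToComplex.symm.toContinuousLinearEquiv.hasFDerivAt.comp_hasDerivAt t hexp
  refine (hcomp.congr_deriv ?_).congr_of_eventuallyEq (Eventually.of_forall sphPt_eq)
  simp [sphPt_eq, add_mul, Complex.exp_add, Complex.exp_pi_div_two_mul_I]

/-- The angular polar coordinate of a point of the plane, taken in `(-π, π]`, and `0` at the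
origin. -/
def polarAngle (x : E2) : ℝ := Complex.arg (planeToComplex x)

theorem norm_smul_sphPt_polarAngle (x : E2) : ‖x‖ • sphPt (polarAngle x) = x := by
  apply planeToComplex.injective
  rw [map_smul, planeToComplex_sphPt, polarAngle, ← planeToComplex.norm_map, Complex.real_smul,
    Complex.norm_mul_exp_arg_mul_I]

theorem coe_polarAngle_smul_sphPt {r : ℝ} (hr : 0 < r) (t : ℝ) :
    (polarAngle (r • sphPt t) : Angle) = t := by
  rw [polarAngle, map_smul, planeToComplex_sphPt, Complex.real_smul, Complex.arg_real_mul _ hr,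
    Complex.arg_exp_mul_I, Angle.coe_toIocMod]

theorem periodic_eq_of_coe_angle_eq {α : Type*} {g : ℝ → α} (hg : Periodic g (2 * π)) {s t : ℝ}
    (h : (s : Angle) = t) : g s = g t := by
  obtain ⟨k, hk⟩ := Angle.angle_eq_iff_two_pi_dvd_sub.1 h
  rw [sub_eq_iff_eq_add'.1 hk, mul_comm]
  exact hg.int_mul k t

theorem contDiffAt_polarAngle {x : E2} (hx : planeToComplex x ∈ Complex.slitPlane) :
    ContDiffAt ℝ ∞ polarAngle x := by
  have hlog : ContDiffAt ℝ ∞ (fun x => Complex.log (planeToComplex x)) x :=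
    ((Complex.contDiffAt_log hx).restrict_scalars ℝ).comp x planeToComplex.contDiff.contDiffAt
  have him := (Complex.imCLM.contDiff (n := ∞)).contDiffAt.comp x hlog
  exact him.congr_of_eventuallyEq (Eventually.of_forall fun y => (Complex.log_im _).symm)

theorem contDiffAt_comp_polar {G : Type*} [NormedAddCommGroup G] [NormedSpace ℝ G]
    {F : ℝ × ℝ → G} (hF : ContDiff ℝ ∞ F) (hper : ∀ r, Periodic (fun t => F (r, t)) (2 * π))
    (c : ℝ) {x : E2} (hx : x ≠ 0) :
    ContDiffAt ℝ ∞ (fun y => F (c * ‖y‖, polarAngle y)) x := by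
  have hnorm : ContDiffAt ℝ ∞ (fun y => c * ‖y‖) x := contDiffAt_const.mul (contDiffAt_norm ℝ hx)
  have hx' : planeToComplex x ≠ 0 := planeToComplex.map_eq_zero_iff.not.2 hx
  rcases Complex.mem_slitPlane_or_neg_mem_slitPlane hx' with hslit | hslit
  · exact hF.contDiffAt.comp x (hnorm.prodMk (contDiffAt_polarAngle hslit))
  · rw [← map_neg] at hslit
    have hangle : ContDiffAt ℝ ∞ (fun y => polarAngle (-y) + π) x :=
      ((contDiffAt_polarAngle hslit).comp x contDiff_neg.contDiffAt).add contDiffAt_const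
    refine (hF.contDiffAt.comp x (hnorm.prodMk hangle)).congr_of_eventuallyEq ?_
    filter_upwards [isOpen_ne.mem_nhds hx] with y hy
    refine periodic_eq_of_coe_angle_eq (hper _) ?_
    rw [Angle.coe_add, polarAngle, polarAngle, map_neg,
      Complex.arg_neg_coe_angle (planeToComplex.map_eq_zero_iff.not.2 hy), add_assoc,
      ← Angle.coe_add, ← two_mul, Angle.coe_two_pi, add_zero]

namespace RegularPolarExtension

variable {g v : ℝ → ℝ} (F : RegularPolarExtension g v)

/-- The function on the plane given in polar coordinates by `F`, rescaled to the unit disk. -/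
def toPlane (x : E2) : ℝ := F.toFun (F.R * ‖x‖, polarAngle x)

theorem toPlane_smul_sphPt {r : ℝ} (hr : 0 < r) (t : ℝ) :
    F.toPlane (r • sphPt t) = F.toFun (F.R * r, t) := by
  rw [toPlane, norm_smul, norm_sphPt, mul_one, norm_of_nonneg hr.le]
  exact periodic_eq_of_coe_angle_eq (F.periodic _) (coe_polarAngle_smul_sphPt hr t)

theorem R_pos : 0 < F.R := one_pos.trans F.one_lt_R

theorem toPlane_eq_linear {x : E2} (hx : F.R * ‖x‖ ≤ 1) :
    F.toPlane x = F.A + F.B * F.R * ⟪sphPt F.μ, x⟫ := by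
  rw [toPlane, F.eq_linear _ hx]
  conv_rhs => rw [← norm_smul_sphPt_polarAngle x, inner_smul_right, inner_sphPt_sphPt]
  ring

theorem toPlane_eventuallyEq_linear {x : E2} (hx : F.R * ‖x‖ < 1) :
    F.toPlane =ᶠ[𝓝 x] fun y => F.A + F.B * F.R * ⟪sphPt F.μ, y⟫ := by
  have hcont : Continuous fun y : E2 => F.R * ‖y‖ := by fun_prop
  filter_upwards [hcont.continuousAt.eventually_lt_const hx] with y hy
    using F.toPlane_eq_linear hy.le

theorem contDiff_toPlane : ContDiff ℝ ∞ F.toPlane := by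
  refine contDiff_iff_contDiffAt.2 fun x => ?_
  by_cases hx : x = 0
  · refine ContDiffAt.congr_of_eventuallyEq ?_ (F.toPlane_eventuallyEq_linear (by simp [hx]))
    exact contDiffAt_const.add (contDiffAt_const.mul (contDiffAt_const.inner ℝ contDiffAt_id))
  · exact contDiffAt_comp_polar F.contDiff F.periodic F.R hx

theorem fderiv_toPlane_ne_zero {x : E2} (hx : x ∈ Metric.closedBall (0 : E2) 1) :
    fderiv ℝ F.toPlane x ≠ 0 := by
  have hR := F.R_pos
  intro hzero
  rcases lt_or_ge (F.R * ‖x‖) 1 with hsmall | hlarge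
  · have hlin : HasFDerivAt F.toPlane ((F.B * F.R) • innerSL ℝ (sphPt F.μ)) x :=
      (((innerSL ℝ (sphPt F.μ)).hasFDerivAt.const_mul _).const_add _).congr_of_eventuallyEq
        (F.toPlane_eventuallyEq_linear hsmall)
    rw [hlin.fderiv] at hzero
    simpa [norm_sphPt, F.B_pos.ne', hR.ne'] using congrArg (· (sphPt F.μ)) hzero
  · rw [mem_closedBall_zero_iff] at hx
    have hx0 : 0 < ‖x‖ := pos_of_mul_pos_right (one_pos.trans_le hlarge) hR.le
    set φ : ℝ × ℝ → E2 := fun p => (p.1 / F.R) • sphPt p.2 with hφ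
    have hsph : Differentiable ℝ sphPt := contDiff_sphPt.differentiable (by simp)
    have hφ_diff : Differentiable ℝ φ := by fun_prop
    have hφx : φ (F.R * ‖x‖, polarAngle x) = x := by
      simp only [hφ, mul_div_cancel_left₀ _ hR.ne', norm_smul_sphPt_polarAngle]
    have hcomp : F.toFun =ᶠ[𝓝 (F.R * ‖x‖, polarAngle x)] F.toPlane ∘ φ := by
      filter_upwards [continuousAt_fst.eventually_const_lt
        (show 0 < (F.R * ‖x‖, polarAngle x).1 by simp only; positivity)] with p hp
      rw [comp_apply, F.toPlane_smul_sphPt (div_pos hp hR), mul_div_cancel₀ _ hR.ne']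
    refine F.fderiv_ne_zero (F.R * ‖x‖) ⟨hlarge, mul_le_of_le_one_right hR.le hx⟩
      (polarAngle x) ?_
    rw [hcomp.fderiv_eq, fderiv_comp _ (F.contDiff_toPlane.differentiable (by simp) _)
      (hφ_diff _), hφx, hzero, ContinuousLinearMap.zero_comp]

theorem exists_extension_fderiv_ne_zero (F : RegularPolarExtension g v) :
    ∃ f : E2 → ℝ, ContDiff ℝ ∞ f ∧ (∀ t, f (sphPt t) = g t) ∧
      ∀ x ∈ Metric.closedBall (0 : E2) 1, fderiv ℝ f x ≠ 0 := by
  refine ⟨F.toPlane, F.contDiff_toPlane, fun t => ?_, fun x => F.fderiv_toPlane_ne_zero⟩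
  rw [← one_smul ℝ (sphPt t), F.toPlane_smul_sphPt one_pos, mul_one]
  exact (congrFun F.boundary_eq t).symm

end RegularPolarExtension

/-! ### Interpolation along a partition of the circle -/

/-- The points `θ 0 < ⋯ < θ n = θ 0 + 2π` cut the circle `ℝ / 2πℤ` into `n` arcs. -/
structure IsCirclePartition (θ : ℕ → ℝ) (n : ℕ) : Prop where
  strictMonoOn : StrictMonoOn θ (Iic n)
  last_eq : θ n = θ 0 + 2 * π

theorem exists_mem_Ico_succ {θ : ℕ → ℝ} {n : ℕ} {x : ℝ} (hx : x ∈ Ico (θ 0) (θ n)) :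
    ∃ j < n, x ∈ Ico (θ j) (θ (j + 1)) := by
  induction n with
  | zero => exact absurd hx.2 hx.1.not_gt
  | succ n ih =>
    rcases lt_or_ge x (θ n) with hlt | hge
    · obtain ⟨j, hj, hxj⟩ := ih ⟨hx.1, hlt⟩
      exact ⟨j, hj.trans n.lt_succ_self, hxj⟩
    · exact ⟨n, n.lt_succ_self, hge, hx.2⟩

namespace IsCirclePartition

variable {θ : ℕ → ℝ} {n i j : ℕ} (h : IsCirclePartition θ n)
include h

theorem lt (hij : i < j) (hj : j ≤ n) : θ i < θ j :=
  h.strictMonoOn (hij.le.trans hj) hj hij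

theorem le (hij : i ≤ j) (hj : j ≤ n) : θ i ≤ θ j :=
  h.strictMonoOn.monotoneOn (hij.trans hj) hj hij

theorem lt_succ (hj : j < n) : θ j < θ (j + 1) := h.lt j.lt_succ_self hj

theorem pos : 0 < n := by
  refine Nat.pos_of_ne_zero fun h0 => ?_
  have := h.last_eq
  rw [h0] at this
  linarith [pi_pos]

theorem forall_of_forall_arc {p : ℝ → Prop} (hp : Periodic p (2 * π))
    (harc : ∀ j < n, ∀ x ∈ Ico (θ j) (θ (j + 1)), p x) (x : ℝ) : p x := by
  obtain ⟨y, hy, hxy⟩ := hp.exists_mem_Ico two_pi_pos x (θ 0)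
  rw [← h.last_eq] at hy
  obtain ⟨j, hj, hyj⟩ := exists_mem_Ico_succ hy
  exact hxy ▸ harc j hj y hyj

end IsCirclePartition

theorem exists_contDiff_periodic_eqOn_Icc {F : ℝ → ℝ} (hF : ContDiff ℝ ∞ F) {a T C : ℝ}
    (hT : 0 < T) (hleft : ∀ x ≤ a, F x = C) (hright : ∀ x, a + T ≤ x → F x = C) :
    ∃ G : ℝ → ℝ, ContDiff ℝ ∞ G ∧ Periodic G T ∧ EqOn G F (Icc a (a + T)) := by
  set G : ℝ → ℝ := fun x => F (toIcoMod hT a x) with hG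
  have hper : Periodic G T := fun x => by simp only [hG, toIcoMod_add_right]
  have hIco : EqOn G F (Ico a (a + T)) := fun x hx => by
    simp only [hG, (toIcoMod_eq_self hT).2 hx]
  have hIoo : ∀ x ∈ Ioo (a - T) (a + T), G x = F x + F (x + T) - C := by
    intro x hx
    rcases le_or_gt a x with hax | hxa
    · rw [hIco ⟨hax, hx.2⟩, hright (x + T) (by linarith), add_sub_cancel_right]
    · rw [← hper x, hIco ⟨by linarith [hx.1], by linarith⟩, hleft x hxa.le, add_sub_cancel_left]
  refine ⟨G, contDiff_iff_contDiffAt.2 fun x => ?_, hper, fun x hx => ?_⟩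
  · set c := toIcoDiv hT a x • T
    have hsmooth : ContDiff ℝ ∞ fun y => F (y - c) + F (y - c + T) - C :=
      ((hF.comp (by fun_prop)).add (hF.comp (by fun_prop))).sub contDiff_const
    refine hsmooth.contDiffAt.congr_of_eventuallyEq ?_
    have hmem : x - c ∈ Ico a (a + T) := toIcoMod_mem_Ico hT a x
    have hmem' : x - c ∈ Ioo (a - T) (a + T) := ⟨by linarith [hmem.1], hmem.2⟩
    have hcont : ContinuousAt (fun y => y - c) x := by fun_prop
    filter_upwards [hcont.preimage_mem_nhds (isOpen_Ioo.mem_nhds hmem')] with y hy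
    rw [← hIoo _ hy]
    exact (hper.sub_zsmul_eq _).symm
  · rcases hx.2.eq_or_lt with rfl | hlt
    · rw [hright _ le_rfl, hper a, hIco ⟨le_rfl, by linarith⟩, hleft a le_rfl]
    · exact hIco ⟨hx.1, hlt⟩

/-- `G` is the smooth periodic function running from `y j` to `y (j + 1)` on the arc
`[θ j, θ (j + 1)]` with profile `P j`. -/
structure IsInterpolation (G : ℝ → ℝ) (θ : ℕ → ℝ) (n : ℕ) (y : ℕ → ℝ) (P : ℕ → ℝ → ℝ) : Prop where
  contDiff : ContDiff ℝ ∞ G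
  periodic : Periodic G (2 * π)
  eq_on_arc : ∀ j < n, ∀ x ∈ Icc (θ j) (θ (j + 1)), G x = y j + (y (j + 1) - y j) * P j x

section Interpolation

variable {θ y a b : ℕ → ℝ} {n : ℕ} {P : ℕ → ℝ → ℝ}

theorem sum_steps_eq (hθ : IsCirclePartition θ n)
    (hP : ∀ j < n, IsSmoothStep (P j) (a j) (b j)) (ha : ∀ j < n, θ j ≤ a j)
    (hb : ∀ j < n, b j ≤ θ (j + 1)) {k : ℕ} (hk : k < n) {x : ℝ}
    (hleft : 0 < k → θ k ≤ x) (hright : k + 1 < n → x ≤ θ (k + 1)) :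
    y 0 + ∑ j ∈ Finset.range n, (y (j + 1) - y j) * P j x = y k + (y (k + 1) - y k) * P k x := by
  have hone : ∀ j ∈ Finset.range k, (y (j + 1) - y j) * P j x = y (j + 1) - y j := by
    intro j hj
    rw [Finset.mem_range] at hj
    rw [(hP j (hj.trans hk)).eq_one x, mul_one]
    exact (hb j (hj.trans hk)).trans ((hθ.le hj hk.le).trans (hleft (by lia)))
  have hzero : ∀ j ∈ Finset.range n, j ∉ Finset.range (k + 1) →
      (y (j + 1) - y j) * P j x = 0 := by
    intro j hj hjk
    rw [Finset.mem_range] at hj hjk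
    rw [(hP j hj).eq_zero x, mul_zero]
    exact (hright (by lia)).trans ((hθ.le (by lia) hj.le).trans (ha j hj))
  rw [← Finset.sum_subset (Finset.range_mono hk) hzero, Finset.sum_range_succ,
    Finset.sum_congr rfl hone, Finset.sum_range_sub]
  ring

theorem IsCirclePartition.exists_isInterpolation (hθ : IsCirclePartition θ n) (hy : y n = y 0)
    (hP : ∀ j < n, IsSmoothStep (P j) (a j) (b j)) (ha : ∀ j < n, θ j ≤ a j)
    (hb : ∀ j < n, b j ≤ θ (j + 1)) : ∃ G, IsInterpolation G θ n y P := by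
  have hn := hθ.pos
  have hF : ContDiff ℝ ∞ fun x => y 0 + ∑ j ∈ Finset.range n, (y (j + 1) - y j) * P j x :=
    contDiff_const.add <| ContDiff.sum fun j hj =>
      contDiff_const.mul (hP j (Finset.mem_range.1 hj)).contDiff
  have hlast : n - 1 + 1 = n := Nat.sub_add_cancel hn
  obtain ⟨G, hG, hper, hGF⟩ := exists_contDiff_periodic_eqOn_Icc (a := θ 0) (C := y 0) hF two_pi_pos
    (fun x hx => by
      rw [sum_steps_eq hθ hP ha hb hn (fun h => absurd h (lt_irrefl 0))
        fun h => hx.trans (hθ.le (Nat.zero_le _) h.le), (hP 0 hn).eq_zero x (hx.trans (ha 0 hn))]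
      ring)
    (fun x hx => by
      rw [← hθ.last_eq] at hx
      rw [sum_steps_eq hθ hP ha hb (Nat.sub_one_lt hn.ne')
        (fun _ => (hθ.le (n.sub_le 1) le_rfl).trans hx) fun h => by lia,
        (hP _ (Nat.sub_one_lt hn.ne')).eq_one x ((hb _ (by lia)).trans (by rwa [hlast])), hlast, hy]
      ring)
  rw [← hθ.last_eq] at hGF
  refine ⟨G, hG, hper, fun j hj x hx => ?_⟩
  rw [hGF ⟨(hθ.le j.zero_le hj.le).trans hx.1, hx.2.trans (hθ.le hj le_rfl)⟩]
  exact sum_steps_eq hθ hP ha hb hj (fun _ => hx.1) fun _ => hx.2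

namespace IsInterpolation

variable {G : ℝ → ℝ} (h : IsInterpolation G θ n y P)
include h

theorem apply_partition (hθ : IsCirclePartition θ n) (hP : ∀ j < n, IsSmoothStep (P j) (a j) (b j))
    (ha : ∀ j < n, θ j ≤ a j) (hb : ∀ j < n, b j ≤ θ (j + 1)) {j : ℕ} (hj : j ≤ n) :
    G (θ j) = y j := by
  rcases hj.eq_or_lt with rfl | hlt
  · obtain ⟨k, rfl⟩ := Nat.exists_eq_succ_of_ne_zero hθ.pos.ne'
    have hk := k.lt_succ_self
    rw [h.eq_on_arc k hk _ ⟨(hθ.lt_succ hk).le, le_rfl⟩, (hP k hk).eq_one _ (hb k hk)]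
    ring
  · rw [h.eq_on_arc j hlt _ ⟨le_rfl, (hθ.lt_succ hlt).le⟩, (hP j hlt).eq_zero _ (ha j hlt)]
    ring

theorem deriv_eq {j : ℕ} (hj : j < n) (hP : Differentiable ℝ (P j)) {x : ℝ}
    (hx : x ∈ Ioo (θ j) (θ (j + 1))) : deriv G x = (y (j + 1) - y j) * deriv (P j) x := by
  have heq : EqOn G (fun x => y j + (y (j + 1) - y j) * P j x) (Icc (θ j) (θ (j + 1))) :=
    h.eq_on_arc j hj
  rw [(heq.eventuallyEq_of_mem (Icc_mem_nhds hx.1 hx.2)).deriv_eq]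
  exact (((hP x).hasDerivAt.const_mul _).const_add _).deriv

end IsInterpolation

end Interpolation

/-! ### Zigzag functions -/

/-- On the arcs `(θ j, θ (j + 1))` the derivative of `g` is alternately negative and positive, so
that `g` has maxima at the `θ j` with even `j` and minima at those with odd `j`. -/
def IsZigzagOn (g : ℝ → ℝ) (θ : ℕ → ℝ) (n : ℕ) : Prop :=
  ∀ j < n, ∀ x ∈ Ioo (θ j) (θ (j + 1)), 0 < (-1 : ℝ) ^ (j + 1) * deriv g x

theorem IsZigzagOn.strictMonoOn {g : ℝ → ℝ} {θ : ℕ → ℝ} {n j : ℕ} (h : IsZigzagOn g θ n)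
    (hg : Differentiable ℝ g) (hj : j < n) :
    StrictMonoOn (fun x => (-1 : ℝ) ^ (j + 1) * g x) (Icc (θ j) (θ (j + 1))) := by
  refine strictMonoOn_of_deriv_pos (convex_Icc _ _) (hg.continuous.const_mul _).continuousOn
    fun x hx => ?_
  rw [interior_Icc] at hx
  rw [deriv_const_mul _ (hg x)]
  exact h j hj x hx

theorem RegularPolarExtension.nonempty_attach_of_isZigzagOn {g G v : ℝ → ℝ} {θ : ℕ → ℝ} {n : ℕ}
    (F : RegularPolarExtension G v) (hg : ContDiff ℝ ∞ g) (hper : Periodic g (2 * π))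
    (hθ : IsCirclePartition θ n) (hG : IsZigzagOn G θ n)
    (hknot : ∀ j < n, 0 < v (θ j) * (g (θ j) - G (θ j)))
    (harc : ∀ j < n, ∀ x ∈ Ioo (θ j) (θ (j + 1)), g x = G x → 0 < (-1 : ℝ) ^ (j + 1) * deriv g x) :
    Nonempty (RegularPolarExtension g (fun x => g x - G x)) := by
  have hGper := F.periodic_boundary
  refine F.nonempty_attach hg hper ?_ ?_
  · refine hθ.forall_of_forall_arc
      (fun x => by simp only [periodic_deriv hGper x, F.periodic_slope x, hper x, hGper x])
      fun j hj x hx hcrit => ?_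
    rcases hx.1.eq_or_lt with rfl | hlt
    · exact hknot j hj
    · exact absurd hcrit fun h => by simpa [h] using hG j hj x ⟨hlt, hx.2⟩
  · refine hθ.forall_of_forall_arc
      (fun x => by simp only [periodic_deriv hGper x, periodic_deriv hper x, hper x, hGper x])
      fun j hj x hx heq => ?_
    rcases hx.1.eq_or_lt with rfl | hlt
    · exact absurd (hknot j hj) (by simp [heq])
    · have hprod := mul_pos (hG j hj x ⟨hlt, hx.2⟩) (harc j hj x ⟨hlt, hx.2⟩ heq)
      rwa [mul_mul_mul_comm, ← mul_pow, neg_one_mul, neg_neg, one_pow, one_mul] at hprod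

/-! ### The base case: two extrema -/

theorem eventually_forall_pos_of_eq_zero {h k : ℝ × ℝ → ℝ} {p : ℝ} (hp : 0 < p)
    (hh : Continuous h) (hk : Continuous k) (hh_per : ∀ s, Periodic (fun x => h (s, x)) p)
    (hk_per : ∀ s, Periodic (fun x => k (s, x)) p) (h0 : ∀ x, h (0, x) = 0 → 0 < k (0, x)) :
    ∀ᶠ s in 𝓝 (0 : ℝ), ∀ x, h (s, x) = 0 → 0 < k (s, x) := by
  have hcompact : ∀ᶠ s in 𝓝 (0 : ℝ), ∀ x ∈ Icc 0 p, h (s, x) = 0 → 0 < k (s, x) := by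
    refine isCompact_Icc.eventually_forall_of_forall_eventually fun x _ => ?_
    by_cases hx : h (0, x) = 0
    · filter_upwards [hk.continuousAt.eventually_const_lt (h0 x hx)] with z hz _ using hz
    · filter_upwards [hh.continuousAt.eventually_ne hx] with z hz hz' using absurd hz' hz
  filter_upwards [hcompact] with s hs x
  obtain ⟨y, hy, hxy⟩ :=
    Periodic.exists_mem_Ico₀ (f := fun x => (h (s, x), k (s, x))) (c := p)
      (fun x => by simp only [hh_per s x, hk_per s x]) hp x
  rw [(Prod.mk.inj hxy).1, (Prod.mk.inj hxy).2]
  exact hs y (Ico_subset_Icc_self hy)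

theorem pos_cos_mul_of_sin_eq_zero {g : ℝ → ℝ} (hper : Periodic g (2 * π)) {A μ x : ℝ}
    (hmax : A < g μ) (hmin : g (μ + π) < A) (hx : sin (x - μ) = 0) :
    0 < cos (x - μ) * (g x - A) := by
  rcases sin_eq_zero_iff_cos_eq.1 hx with hcos | hcos
  · obtain ⟨k, hk⟩ := (cos_eq_one_iff _).1 hcos
    have hgx : g x = g μ := by
      rw [show x = μ + k * (2 * π) by linarith]
      exact hper.int_mul k μ
    rw [hcos, hgx]
    linarith
  · obtain ⟨k, hk⟩ := cos_eq_neg_one_iff.1 hcos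
    have hgx : g x = g (μ + π) := by
      rw [show x = μ + π + k * (2 * π) by linarith]
      exact hper.int_mul k _
    rw [hcos, hgx]
    linarith

theorem eventually_nonempty_regularPolarExtension {g : ℝ → ℝ} (hg : ContDiff ℝ ∞ g)
    (hper : Periodic g (2 * π)) {A μ : ℝ} (hmax : A < g μ) (hmin : g (μ + π) < A)
    (hlevel : ∀ x, g x = A → 0 < -sin (x - μ) * deriv g x) :
    ∀ᶠ B in 𝓝[>] 0,
      Nonempty (RegularPolarExtension g fun x => g x - (A + 2 * B * cos (x - μ))) := by
  have hcont := hg.continuous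
  have hcont' : Continuous (deriv g) := hg.continuous_deriv (by simp)
  have hsin : Periodic (fun x => sin (x - μ)) (2 * π) := sin_periodic.sub_const μ
  have hcrit := eventually_forall_pos_of_eq_zero two_pi_pos (h := fun p => sin (p.2 - μ))
    (k := fun p => cos (p.2 - μ) * (g p.2 - (A + 2 * p.1 * cos (p.2 - μ))))
    (by fun_prop) (by fun_prop) (fun _ x => hsin x)
    (fun s x => by simp only [periodic_cos_sub μ x, hper x])
    (fun x hx => by simpa using pos_cos_mul_of_sin_eq_zero hper hmax hmin hx)
  have hcrease := eventually_forall_pos_of_eq_zero two_pi_pos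
    (h := fun p => g p.2 - (A + 2 * p.1 * cos (p.2 - μ)))
    (k := fun p => -sin (p.2 - μ) * deriv g p.2) (by fun_prop) (by fun_prop)
    (fun s x => by simp only [periodic_cos_sub μ x, hper x])
    (fun s x => by simp only [hsin x, periodic_deriv hper x])
    (fun x hx => hlevel x (by simpa [sub_eq_zero] using hx))
  filter_upwards [self_mem_nhdsWithin, nhdsWithin_le_nhds hcrit, nhdsWithin_le_nhds hcrease]
    with B (hB : 0 < B) hBcrit hBcrease
  have hderiv (x : ℝ) : deriv (fun x => A + 2 * B * cos (x - μ)) x = 2 * B * -sin (x - μ) :=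
    (((hasDerivAt_cos_sub μ x).const_mul _).const_add A).deriv
  refine (RegularPolarExtension.linear A μ hB).nonempty_attach hg hper
    (fun x hx => ?_) fun x hx => ?_
  · rw [hderiv] at hx
    rw [mul_assoc]
    exact mul_pos hB (hBcrit x (by simpa [hB.ne'] using hx))
  · rw [hderiv, mul_assoc]
    exact mul_pos (by linarith) (hBcrease x (sub_eq_zero.2 hx))

theorem IsZigzagOn.exists_level_crossings {g : ℝ → ℝ} {θ : ℕ → ℝ} (h : IsZigzagOn g θ 2)
    (hg : Differentiable ℝ g) (hper : Periodic g (2 * π)) (hθ : IsCirclePartition θ 2) :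
    ∃ A, ∃ β ∈ Ioo (θ 0) (θ 1), ∃ α ∈ Ioo (θ 1) (θ 2),
      (∀ x ∈ Ioo (α - 2 * π) β, A < g x) ∧ ∀ x ∈ Ioo β α, g x < A := by
  have hlt₀ : θ 0 < θ 1 := hθ.lt_succ (by lia)
  have hlt₁ : θ 1 < θ 2 := hθ.lt_succ (by lia)
  have hlast := hθ.last_eq
  have hanti : StrictAntiOn g (Icc (θ 0) (θ 1)) := by
    simpa [StrictMonoOn, StrictAntiOn] using h.strictMonoOn hg (j := 0) (by lia)
  have hmono : StrictMonoOn g (Icc (θ 1) (θ 2)) := by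
    simpa using h.strictMonoOn hg (j := 1) (by lia)
  obtain ⟨A, hA₁, hA₀⟩ := exists_between (hanti ⟨le_rfl, hlt₀.le⟩ ⟨hlt₀.le, le_rfl⟩ hlt₀)
  have hA₂ : A < g (θ 2) := by rwa [hlast, hper]
  obtain ⟨β, hβ, rfl⟩ := intermediate_value_Ioo' hlt₀.le hg.continuous.continuousOn ⟨hA₁, hA₀⟩
  obtain ⟨α, hα, hgα⟩ := intermediate_value_Ioo hlt₁.le hg.continuous.continuousOn ⟨hA₁, hA₂⟩
  have hβ' := Ioo_subset_Icc_self hβ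
  have hα' := Ioo_subset_Icc_self hα
  refine ⟨g β, β, hβ, α, hα, fun x hx => ?_, fun x hx => ?_⟩
  · rcases le_total (θ 0) x with hx0 | hx0
    · exact hanti ⟨hx0, hx.2.le.trans hβ.2.le⟩ hβ' hx.2
    · rw [← hgα, ← hper x]
      exact hmono hα' ⟨by linarith [hx.1, hα.1], by linarith⟩ (by linarith [hx.1])
  · rcases le_total x (θ 1) with hx1 | hx1
    · exact hanti hβ' ⟨hβ.1.le.trans hx.1.le, hx1⟩ hx.1
    · exact hgα ▸ hmono ⟨hx1, hx.2.le.trans hα.2.le⟩ hα' hx.2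

/-- Take `μ` midway between the two points where `g = A` on either side of the maximum. -/
theorem IsZigzagOn.exists_level_and_phase {g : ℝ → ℝ} {θ : ℕ → ℝ} (h : IsZigzagOn g θ 2)
    (hg : Differentiable ℝ g) (hper : Periodic g (2 * π)) (hθ : IsCirclePartition θ 2) :
    ∃ A μ, A < g (θ 0) ∧ g (θ 1) < A ∧ A < g μ ∧ g (μ + π) < A ∧
      ∀ x, g x = A → 0 < -sin (x - μ) * deriv g x := by
  obtain ⟨A, β, hβ, α, hα, habove, hbelow⟩ := h.exists_level_crossings hg hper hθ
  have hlast := hθ.last_eq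
  obtain ⟨hβ₀, hβ₁⟩ := hβ
  obtain ⟨hα₁, hα₂⟩ := hα
  set μ := (α - 2 * π + β) / 2 with hμ
  have hsinβ : 0 < sin (β - μ) := sin_pos_of_pos_of_lt_pi (by linarith) (by linarith)
  refine ⟨A, μ, habove _ ⟨by linarith, hβ₀⟩, hbelow _ ⟨hβ₁, hα₁⟩,
    habove μ ⟨by linarith, by linarith⟩, hbelow _ ⟨by linarith, by linarith⟩,
    hθ.forall_of_forall_arc ?_ fun j hj x hx hgx => ?_⟩
  · intro x
    have hsin : sin (x + 2 * π - μ) = sin (x - μ) := sin_periodic.sub_const μ x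
    simp only [hper x, hsin, periodic_deriv hper x]
  have hcrossing : x = β ∨ x = α := by
    by_contra! hne
    have hx₀ : θ 0 ≤ x := (hθ.le j.zero_le hj.le).trans hx.1
    have hx₂ : x < θ 2 := hx.2.trans_le (hθ.le hj le_rfl)
    rcases hne.1.lt_or_gt with hlt | hlt
    · exact (habove x ⟨by linarith, hlt⟩).ne' hgx
    rcases hne.2.lt_or_gt with hlt' | hlt'
    · exact (hbelow x ⟨hlt, hlt'⟩).ne hgx
    · exact (habove (x - 2 * π) ⟨by linarith, by linarith⟩).ne' (by rw [hper.sub_eq, hgx])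
  rcases hcrossing with rfl | rfl
  · exact mul_pos_of_neg_of_neg (neg_neg_of_pos hsinβ) (by simpa using h 0 (by lia) x ⟨hβ₀, hβ₁⟩)
  · have hsinα : sin (x - μ) = -sin (β - μ) := by
      rw [← sin_neg, ← sin_sub_two_pi (x - μ)]
      congr 1
      linarith
    rw [hsinα, neg_neg]
    exact mul_pos hsinβ (by simpa using h 1 (by lia) x ⟨hα₁, hα₂⟩)

/-! ### Creating a pair of adjacent extrema -/

/-- The sequence `y 0, …, y n` alternately decreases and increases, starting with a decrease. -/
def IsZigzag (y : ℕ → ℝ) (n : ℕ) : Prop :=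
  ∀ j < n, 0 < (-1 : ℝ) ^ (j + 1) * (y (j + 1) - y j)

/-- The enumeration of `ℕ` without `k + 1` and `k + 2`. -/
def skipPair (k j : ℕ) : ℕ :=
  if j ≤ k then j else j + 2

/-- The adjacent values `y (k + 1)` and `y (k + 2)` of a zigzag sequence can be replaced by a
monotone passage from `y k` to `y (k + 3)` which stays on one side of both: the side of `y k` in the
first case, of `y (k + 3)` in the second. The number `s = ±1` is the sign of the difference
(removed values) − (passage), and `c` is a margin. -/
def IsCancellable (y : ℕ → ℝ) (k : ℕ) (s c : ℝ) : Prop :=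
  s = (-1) ^ (k + 1) ∧ c < (-1) ^ (k + 1) * (y (k + 2) - y k) ∨
    s = -(-1) ^ (k + 1) ∧ c < (-1) ^ (k + 1) * (y (k + 3) - y (k + 1))

theorem skipPair_of_le {k j : ℕ} (h : j ≤ k) : skipPair k j = j := if_pos h

theorem skipPair_of_lt {k j : ℕ} (h : k < j) : skipPair k j = j + 2 := if_neg h.not_ge

theorem skipPair_strictMono (k : ℕ) : StrictMono (skipPair k) := by
  intro i j hij
  unfold skipPair
  split_ifs <;> lia

theorem skipPair_le {k j n : ℕ} (h : j ≤ n) : skipPair k j ≤ n + 2 := by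
  unfold skipPair
  split_ifs <;> lia

theorem eq_or_eq_or_exists_skipPair_eq {n m : ℕ} (k : ℕ) (hm : m ≤ n + 2) (hk : k < n) :
    m = k + 1 ∨ m = k + 2 ∨ ∃ j ≤ n, skipPair k j = m := by
  by_cases hmk : m ≤ k
  · exact Or.inr (Or.inr ⟨m, by lia, skipPair_of_le hmk⟩)
  · by_cases hmk' : m ≤ k + 2
    · lia
    · exact Or.inr (Or.inr ⟨m - 2, by lia, by rw [skipPair_of_lt (by lia)]; lia⟩)

theorem exists_comp_skipPair_eq {α : Type*} (σ : ℕ → α) (s : α) (k : ℕ) :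
    ∃ τ : ℕ → α, (∀ j, τ (skipPair k j) = σ j) ∧ τ (k + 1) = s ∧ τ (k + 2) = s := by
  refine ⟨fun j => if j ≤ k then σ j else if j ≤ k + 2 then s else σ (j - 2), fun j => ?_, ?_, ?_⟩
  · rcases le_or_gt j k with h | h
    · simp [skipPair_of_le h, h]
    · simp [skipPair_of_lt h, show ¬ j + 2 ≤ k by lia, h]
  · simp
  · simp

theorem IsCirclePartition.comp_skipPair {θ : ℕ → ℝ} {n k : ℕ} (h : IsCirclePartition θ (n + 2))
    (hk : k < n) : IsCirclePartition (fun j => θ (skipPair k j)) n where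
  strictMonoOn _ hi _ hj hij :=
    h.strictMonoOn (skipPair_le hi) (skipPair_le hj) (skipPair_strictMono k hij)
  last_eq := by simp only [skipPair_of_lt hk, skipPair_of_le k.zero_le, h.last_eq]

theorem neg_one_pow_add_two_add_one (j : ℕ) : (-1 : ℝ) ^ (j + 2 + 1) = (-1) ^ (j + 1) := by
  ring

/-- Every arc of the coarser partition is an arc of the finer one with the same direction, except
the `k`-th, which is the union of three. -/
theorem IsZigzag.comp_skipPair {y : ℕ → ℝ} {n k : ℕ} {s : ℝ} (h : IsZigzag y (n + 2)) (hk : k < n)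
    (hs : IsCancellable y k s 0) : IsZigzag (fun j => y (skipPair k j)) n := by
  intro j hj
  dsimp only
  rcases lt_trichotomy j k with hjk | rfl | hjk
  · rw [skipPair_of_le hjk, skipPair_of_le hjk.le]
    exact h j (by lia)
  · rw [skipPair_of_lt j.lt_succ_self, skipPair_of_le le_rfl]
    have hfirst := h j (by lia)
    have hlast := h (j + 2) (by lia)
    rw [neg_one_pow_add_two_add_one] at hlast
    rcases hs with ⟨-, hs⟩ | ⟨-, hs⟩ <;> linarith
  · rw [skipPair_of_lt (by lia), skipPair_of_lt hjk]
    have := h (j + 2) (by lia)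
    rwa [neg_one_pow_add_two_add_one] at this

theorem IsZigzagOn.deriv_pos_or_mem_Icc {g : ℝ → ℝ} {θ : ℕ → ℝ} {n k j : ℕ} {x : ℝ}
    (h : IsZigzagOn g θ (n + 2)) (hj : j < n)
    (hx : x ∈ Ioo (θ (skipPair k j)) (θ (skipPair k (j + 1)))) :
    0 < (-1 : ℝ) ^ (j + 1) * deriv g x ∨ x ∈ Icc (θ (k + 1)) (θ (k + 2)) := by
  rcases lt_trichotomy j k with hjk | rfl | hjk
  · rw [skipPair_of_le hjk, skipPair_of_le hjk.le] at hx
    exact Or.inl (h j (by lia) x hx)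
  · rw [skipPair_of_lt j.lt_succ_self, skipPair_of_le le_rfl] at hx
    rcases lt_or_ge x (θ (j + 1)) with hx₁ | hx₁
    · exact Or.inl (h j (by lia) x ⟨hx.1, hx₁⟩)
    rcases le_or_gt x (θ (j + 2)) with hx₂ | hx₂
    · exact Or.inr ⟨hx₁, hx₂⟩
    · rw [← neg_one_pow_add_two_add_one]
      exact Or.inl (h (j + 2) (by lia) x ⟨hx₂, hx.2⟩)
  · rw [skipPair_of_lt hjk, skipPair_of_lt (hjk.trans j.lt_succ_self)] at hx
    rw [← neg_one_pow_add_two_add_one]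
    exact Or.inl (h (j + 2) (by lia) x hx)

theorem IsCirclePartition.exists_isZigzagOn_of_isSmoothStep {θ z : ℕ → ℝ} {n k : ℕ} {P : ℝ → ℝ}
    (hθ : IsCirclePartition θ n) (hz : IsZigzag z n) (hclosed : z n = z 0) (hk : k < n)
    (hP : IsSmoothStep P (θ k) (θ (k + 1))) :
    ∃ G : ℝ → ℝ, ContDiff ℝ ∞ G ∧ Periodic G (2 * π) ∧ IsZigzagOn G θ n ∧
      (∀ j ≤ n, G (θ j) = z j) ∧
      ∀ x ∈ Icc (θ k) (θ (k + 1)), G x = z k + (z (k + 1) - z k) * P x := by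
  set Q := update (fun j => smoothStep (θ j) (θ (j + 1))) k P with hQ_def
  have hQ : ∀ j < n, IsSmoothStep (Q j) (θ j) (θ (j + 1)) := fun j hj => by
    rcases eq_or_ne j k with rfl | hne
    · rwa [hQ_def, update_self]
    · rw [hQ_def, update_of_ne hne]
      exact isSmoothStep_smoothStep (hθ.lt_succ hj)
  obtain ⟨G, hG⟩ :=
    hθ.exists_isInterpolation hclosed hQ (fun _ _ => le_rfl) fun _ _ => le_rfl
  refine ⟨G, hG.contDiff, hG.periodic, fun j hj x hx => ?_,
    fun j hj => hG.apply_partition hθ hQ (fun _ _ => le_rfl) (fun _ _ => le_rfl) hj,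
    fun x hx => by simpa [hQ_def] using hG.eq_on_arc k hk x hx⟩
  rw [hG.deriv_eq hj (fun x => (hQ j hj).differentiableAt) hx, ← mul_assoc]
  exact mul_pos (hz j hj) ((hQ j hj).deriv_pos x hx)

theorem exists_isSmoothStep_forall_le_lt {a c d A D m : ℝ} (hc : c ∈ Ioo a d) (hAm : A < m)
    (hAD : A < D) : ∃ P, IsSmoothStep P a d ∧ ∀ x ≤ c, A + (D - A) * P x < m := by
  obtain ⟨P, hP, hPc⟩ :=
    exists_isSmoothStep_apply_lt hc (div_pos (sub_pos.2 hAm) (sub_pos.2 hAD))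
  refine ⟨P, hP, fun x hx => ?_⟩
  have := (lt_div_iff₀' (sub_pos.2 hAD)).1 ((hP.monotone hx).trans_lt hPc)
  linarith

theorem exists_isSmoothStep_forall_ge_lt {a b d A D m : ℝ} (hb : b ∈ Ioo a d) (hmD : m < D)
    (hAD : A < D) : ∃ P, IsSmoothStep P a d ∧ ∀ x, b ≤ x → m < A + (D - A) * P x := by
  obtain ⟨P, hP, hPb⟩ :=
    exists_isSmoothStep_lt_apply hb (div_pos (sub_pos.2 hmD) (sub_pos.2 hAD))
  refine ⟨P, hP, fun x hx => ?_⟩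
  have := (lt_div_iff₀' (sub_pos.2 hAD)).1 (sub_lt_comm.1 (hPb.trans_le (hP.monotone hx)))
  linarith

theorem exists_isSmoothStep_passage {g : ℝ → ℝ} {θ : ℕ → ℝ} {n k : ℕ} {s A D : ℝ}
    (hg : Differentiable ℝ g) (hzig : IsZigzagOn g θ (n + 2)) (hθ : IsCirclePartition θ (n + 2))
    (hk : k < n) (hAD : (-1) ^ (k + 1) * A < (-1) ^ (k + 1) * D)
    (h : s = (-1) ^ (k + 1) ∧ (-1) ^ (k + 1) * A < (-1) ^ (k + 1) * g (θ (k + 2)) ∨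
      s = -(-1) ^ (k + 1) ∧ (-1) ^ (k + 1) * g (θ (k + 1)) < (-1) ^ (k + 1) * D) :
    ∃ P, IsSmoothStep P (θ k) (θ (k + 3)) ∧
      ∀ x ∈ Icc (θ (k + 1)) (θ (k + 2)), 0 < s * (g x - (A + (D - A) * P x)) := by
  have hlt₀ := hθ.lt_succ (j := k) (by lia)
  have hlt₁ := hθ.lt_succ (j := k + 1) (by lia)
  have hlt₂ := hθ.lt_succ (j := k + 2) (by lia)
  have hanti : AntitoneOn (fun x => (-1 : ℝ) ^ (k + 1) * g x) (Icc (θ (k + 1)) (θ (k + 2))) := by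
    have := (hzig.strictMonoOn hg (j := k + 1) (by lia)).monotoneOn.neg
    simpa [pow_succ] using this
  rcases h with ⟨rfl, h⟩ | ⟨rfl, h⟩
  · obtain ⟨P, hP, hlt⟩ :=
      exists_isSmoothStep_forall_le_lt ⟨hlt₀.trans hlt₁, hlt₂⟩ h hAD
    refine ⟨P, hP, fun x hx => ?_⟩
    have := hanti hx ⟨hlt₁.le, le_rfl⟩ hx.2
    linear_combination this + hlt x hx.2
  · obtain ⟨P, hP, hlt⟩ :=
      exists_isSmoothStep_forall_ge_lt ⟨hlt₀, hlt₁.trans hlt₂⟩ h hAD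
    refine ⟨P, hP, fun x hx => ?_⟩
    have := hanti ⟨le_rfl, hlt₁.le⟩ hx hx.1
    linear_combination this + hlt x hx.1

theorem exists_isZigzagOn_comp_skipPair {g : ℝ → ℝ} {θ z : ℕ → ℝ} {n k : ℕ} {s : ℝ}
    (hg : Differentiable ℝ g) (hzig : IsZigzagOn g θ (n + 2)) (hθ : IsCirclePartition θ (n + 2))
    (hk : k < n) (hz : IsZigzag z n) (hclosed : z n = z 0)
    (h : s = (-1) ^ (k + 1) ∧ (-1) ^ (k + 1) * z k < (-1) ^ (k + 1) * g (θ (k + 2)) ∨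
      s = -(-1) ^ (k + 1) ∧ (-1) ^ (k + 1) * g (θ (k + 1)) < (-1) ^ (k + 1) * z (k + 1)) :
    ∃ G : ℝ → ℝ, ContDiff ℝ ∞ G ∧ Periodic G (2 * π) ∧
      IsZigzagOn G (fun j => θ (skipPair k j)) n ∧ (∀ j ≤ n, G (θ (skipPair k j)) = z j) ∧
      ∀ x ∈ Icc (θ (k + 1)) (θ (k + 2)), 0 < s * (g x - G x) := by
  obtain ⟨P, hP, hpass⟩ := exists_isSmoothStep_passage hg hzig hθ hk
    (sub_pos.1 (by simpa only [mul_sub] using hz k hk)) h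
  have hk₀ : skipPair k k = k := skipPair_of_le le_rfl
  have hk₁ : skipPair k (k + 1) = k + 3 := skipPair_of_lt k.lt_succ_self
  obtain ⟨G, hG, hper, hGzig, hGz, hGP⟩ :=
    (hθ.comp_skipPair hk).exists_isZigzagOn_of_isSmoothStep (P := P) hz hclosed hk
      (by rwa [hk₀, hk₁])
  simp only [hk₀, hk₁] at hGP
  refine ⟨G, hG, hper, hGzig, hGz, fun x hx => ?_⟩
  rw [hGP x ⟨(hθ.le (by lia) (by lia)).trans hx.1, hx.2.trans (hθ.le (by lia) (by lia))⟩]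
  exact hpass x hx

/-! ### Realizable sequences of extremal values -/

/-- Every smooth zigzag function on the circle whose extremal values are close to `y 0, …, y n` is
the boundary function of a regular polar extension whose outward slope at the `j`-th extremum has
the sign of `σ j`. -/
def RealizesSigns (n : ℕ) (y σ : ℕ → ℝ) : Prop :=
  ∃ ε > 0, ∀ (g : ℝ → ℝ) (θ : ℕ → ℝ), ContDiff ℝ ∞ g → Periodic g (2 * π) →
    IsCirclePartition θ n → IsZigzagOn g θ n → (∀ j ≤ n, |g (θ j) - y j| < ε) →
    ∃ v, Nonempty (RegularPolarExtension g v) ∧ ∀ j ≤ n, 0 < v (θ j) * σ j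

/-- The signs of the outward slopes at the extrema can be prescribed in at least one way. -/
def IsRealizable (n : ℕ) (y : ℕ → ℝ) : Prop :=
  ∃ σ : ℕ → ℝ, (∀ j ≤ n, |σ j| = 1) ∧ σ n = σ 0 ∧ RealizesSigns n y σ

theorem mul_self_pos_of_abs_eq_one {x : ℝ} (h : |x| = 1) : 0 < x * x :=
  mul_self_pos.2 (abs_ne_zero.1 (h ▸ one_ne_zero))

theorem isRealizable_two (y : ℕ → ℝ) : IsRealizable 2 y := by
  refine ⟨fun j => (-1) ^ j, fun j _ => abs_neg_one_pow j, by norm_num, 1, one_pos,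
    fun g θ hg hper hθ hzig _ => ?_⟩
  obtain ⟨A, μ, hA₀, hA₁, hmax, hmin, hlevel⟩ :=
    hzig.exists_level_and_phase (hg.differentiable (by simp)) hper hθ
  have hlim (x : ℝ) :
      Tendsto (fun B : ℝ => g x - (A + 2 * B * cos (x - μ))) (𝓝[>] 0) (𝓝 (g x - A)) := by
    refine tendsto_nhdsWithin_of_tendsto_nhds ?_
    have hcont : Continuous fun B : ℝ => g x - (A + 2 * B * cos (x - μ)) := by fun_prop
    simpa using hcont.tendsto 0
  obtain ⟨B, hF, hB₀, hB₁⟩ :=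
    ((eventually_nonempty_regularPolarExtension hg hper hmax hmin hlevel).and
      (((hlim (θ 0)).eventually_const_lt (sub_pos.2 hA₀)).and
        ((hlim (θ 1)).eventually_lt_const (sub_neg.2 hA₁)))).exists
  refine ⟨_, hF, fun j hj => ?_⟩
  interval_cases j
  · simpa using hB₀
  · simpa using hB₁
  · have hθ₂ : θ 2 = θ 0 + 2 * π := hθ.last_eq
    simpa [hθ₂, hper (θ 0), periodic_cos_sub μ (θ 0)] using hB₀

theorem eventually_mul_lt {a : ℝ} (C : ℝ) (ha : 0 < a) : ∀ᶠ η in 𝓝[>] (0 : ℝ), C * η < a := by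
  have hlim : Tendsto (fun η : ℝ => C * η) (𝓝 0) (𝓝 0) := by
    simpa using (continuous_const_mul C).tendsto 0
  exact nhdsWithin_le_nhds (hlim.eventually_lt_const ha)

theorem abs_neg_one_pow_mul (j : ℕ) (a : ℝ) : |(-1) ^ j * a| = |a| := by
  rw [abs_mul, abs_neg_one_pow, one_mul]

theorem isZigzag_of_abs_sub_lt {y z : ℕ → ℝ} {n : ℕ} {C : ℝ}
    (hgap : ∀ j < n, 2 * C < (-1) ^ (j + 1) * (y (j + 1) - y j)) (h : ∀ j ≤ n, |z j - y j| < C) :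
    IsZigzag z n := by
  intro j hj
  have hnear := abs_lt.1 ((abs_neg_one_pow_mul (j + 1) _).trans_lt (h j hj.le))
  have hnear' := abs_lt.1 ((abs_neg_one_pow_mul (j + 1) _).trans_lt (h (j + 1) hj))
  linear_combination hgap j hj + hnear.2 + hnear'.1

theorem IsCancellable.eventually {y : ℕ → ℝ} {k : ℕ} {s : ℝ} (h : IsCancellable y k s 0) (C : ℝ) :
    ∀ᶠ η in 𝓝[>] (0 : ℝ), IsCancellable y k s (C * η) := by
  rcases h with ⟨hs, h⟩ | ⟨hs, h⟩
  · exact (eventually_mul_lt C h).mono fun η hη => Or.inl ⟨hs, hη⟩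
  · exact (eventually_mul_lt C h).mono fun η hη => Or.inr ⟨hs, hη⟩

theorem exists_isZigzagOn_cancel {g : ℝ → ℝ} {θ y τ : ℕ → ℝ} {n k : ℕ} {s η : ℝ}
    (hg : Differentiable ℝ g) (hper : Periodic g (2 * π)) (hzig : IsZigzagOn g θ (n + 2))
    (hθ : IsCirclePartition θ (n + 2)) (hk : k < n) (hη : 0 < η)
    (hgap : ∀ j < n, 4 * η < (-1) ^ (j + 1) * (y (skipPair k (j + 1)) - y (skipPair k j)))
    (hcancel : IsCancellable y k s (4 * η))
    (hτ : ∀ j ≤ n, |τ j| = 1) (hτclosed : τ n = τ 0) (hnear : ∀ j ≤ n + 2, |g (θ j) - y j| < η) :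
    ∃ G : ℝ → ℝ, ContDiff ℝ ∞ G ∧ Periodic G (2 * π) ∧
      IsZigzagOn G (fun j => θ (skipPair k j)) n ∧
      (∀ j ≤ n, G (θ (skipPair k j)) = g (θ (skipPair k j)) - η * τ j) ∧
      (∀ j ≤ n, |G (θ (skipPair k j)) - y (skipPair k j)| < 2 * η) ∧
      ∀ x ∈ Icc (θ (k + 1)) (θ (k + 2)), 0 < s * (g x - G x) := by
  set z : ℕ → ℝ := fun j => g (θ (skipPair k j)) - η * τ j with hz_def
  have hznear : ∀ j ≤ n, |z j - y (skipPair k j)| < 2 * η := fun j hj => by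
    have hshift : |η * τ j| = η := by rw [abs_mul, hτ j hj, mul_one, abs_of_pos hη]
    calc |z j - y (skipPair k j)|
        = |g (θ (skipPair k j)) - y (skipPair k j) - η * τ j| := by rw [hz_def]; ring_nf
      _ ≤ |g (θ (skipPair k j)) - y (skipPair k j)| + |η * τ j| := abs_sub _ _
      _ < 2 * η := by linarith [hnear _ (skipPair_le (k := k) hj)]
  have hz : IsZigzag z n :=
    isZigzag_of_abs_sub_lt (C := 2 * η) (fun j hj => by linarith [hgap j hj]) hznear
  have hclosed : z n = z 0 := by
    simp only [hz_def, (hθ.comp_skipPair hk).last_eq, hper (θ _), hτclosed]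
  have hzk := hznear k hk.le
  have hzk' := hznear (k + 1) hk
  rw [← abs_neg_one_pow_mul (k + 1), abs_lt] at hzk hzk'
  rw [skipPair_of_le le_rfl] at hzk
  rw [skipPair_of_lt k.lt_succ_self] at hzk'
  have hg₁ := abs_lt.1 ((abs_neg_one_pow_mul (k + 1) _).trans_lt (hnear (k + 1) (by lia)))
  have hg₂ := abs_lt.1 ((abs_neg_one_pow_mul (k + 1) _).trans_lt (hnear (k + 2) (by lia)))
  obtain ⟨G, hG, hGper, hGzig, hGz, hGpass⟩ :=
    exists_isZigzagOn_comp_skipPair (s := s) hg hzig hθ hk hz hclosed (by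
      rcases hcancel with ⟨hs, h⟩ | ⟨hs, h⟩
      · exact Or.inl ⟨hs, by linarith⟩
      · exact Or.inr ⟨hs, by linarith⟩)
  exact ⟨G, hG, hGper, hGzig, hGz, fun j hj => by rw [hGz j hj]; exact hznear j hj, hGpass⟩

theorem IsCancellable.abs_eq_one {y : ℕ → ℝ} {k : ℕ} {s c : ℝ} (h : IsCancellable y k s c) :
    |s| = 1 := by
  rcases h with ⟨rfl, -⟩ | ⟨rfl, -⟩
  · exact abs_neg_one_pow _
  · rw [abs_neg, abs_neg_one_pow]

theorem IsRealizable.of_comp_skipPair {y : ℕ → ℝ} {n k : ℕ} {s : ℝ}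
    (h : IsRealizable n fun j => y (skipPair k j)) (hy : IsZigzag y (n + 2)) (hk : k < n)
    (hs : IsCancellable y k s 0) : IsRealizable (n + 2) y := by
  obtain ⟨σ, hσ, hσclosed, ε, hε, hreal⟩ := h
  obtain ⟨τ, hτσ, hτ₁, hτ₂⟩ := exists_comp_skipPair_eq σ s k
  obtain ⟨η, hηε, hgap, hcancel, hη⟩ := ((eventually_mul_lt 2 hε).and
    (((eventually_all_finite (finite_Iio n)).2 fun j hj =>
      eventually_mul_lt 4 (hy.comp_skipPair hk hs j hj)).and
        ((hs.eventually 4).and self_mem_nhdsWithin))).exists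
  refine ⟨τ, ?_, ?_, η, hη, fun g θ hg hper hθ hzig hnear => ?_⟩
  · intro m hm
    rcases eq_or_eq_or_exists_skipPair_eq k hm hk with rfl | rfl | ⟨j, hj, rfl⟩
    · rw [hτ₁, hs.abs_eq_one]
    · rw [hτ₂, hs.abs_eq_one]
    · rw [hτσ, hσ j hj]
  · rw [← skipPair_of_lt hk, hτσ, hσclosed, ← hτσ 0, skipPair_of_le k.zero_le]
  obtain ⟨G, hG, hGper, hGzig, hGknot, hGnear, hGpass⟩ := exists_isZigzagOn_cancel
    (hg.differentiable (by simp)) hper hzig hθ hk hη hgap hcancel hσ hσclosed hnear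
  have hθ' := hθ.comp_skipPair hk
  obtain ⟨v, ⟨F⟩, hv⟩ :=
    hreal G _ hG hGper hθ' hGzig fun j hj => (hGnear j hj).trans hηε
  have hknot : ∀ j ≤ n, g (θ (skipPair k j)) - G (θ (skipPair k j)) = η * σ j := fun j hj => by
    rw [hGknot j hj, sub_sub_cancel]
  refine ⟨_, F.nonempty_attach_of_isZigzagOn hg hper hθ' hGzig (fun j hj => ?_)
    fun j hj x hx heq => ?_, fun m hm => ?_⟩
  · rw [hknot j hj.le, mul_left_comm]
    exact mul_pos hη (hv j hj.le)
  · exact (hzig.deriv_pos_or_mem_Icc hj hx).resolve_right fun hmem => by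
      simpa [heq] using hGpass x hmem
  · have hlt : θ (k + 1) ≤ θ (k + 2) := hθ.le (by lia) (by lia)
    rw [mul_comm]
    rcases eq_or_eq_or_exists_skipPair_eq k hm hk with rfl | rfl | ⟨j, hj, rfl⟩
    · exact hτ₁ ▸ hGpass _ ⟨le_rfl, hlt⟩
    · exact hτ₂ ▸ hGpass _ ⟨hlt, le_rfl⟩
    · rw [hknot j hj, hτσ, mul_left_comm]
      exact mul_pos hη (mul_self_pos_of_abs_eq_one (hσ j hj))

/-! ### Extrema with degenerate arcs -/

theorem exists_subarc_forall_le_deriv {h : ℝ → ℝ} (hh : ContDiff ℝ 1 h) {a b : ℝ} (hab : a < b)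
    (hlt : h a < h b) :
    ∃ u v δ, a < u ∧ u < v ∧ v < b ∧ 0 < δ ∧ ∀ x ∈ Icc u v, δ ≤ deriv h x := by
  obtain ⟨c, hc, hderiv⟩ := exists_deriv_eq_slope h hab hh.continuous.continuousOn
    (hh.differentiable one_ne_zero).differentiableOn
  have hpos : 0 < deriv h c := by
    rw [hderiv]
    exact div_pos (sub_pos.2 hlt) (sub_pos.2 hab)
  have hnear : ∀ᶠ x in 𝓝 c, x ∈ Ioo a b ∧ deriv h c / 2 < deriv h x :=
    (isOpen_Ioo.eventually_mem hc).and
      ((hh.continuous_deriv le_rfl).continuousAt.eventually_const_lt (half_lt_self hpos))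
  obtain ⟨r, hr, hball⟩ := (nhds_basis_Icc_pos c).eventually_iff.1 hnear
  refine ⟨c - r, c + r, deriv h c / 2, (hball ⟨le_rfl, by linarith⟩).1.1, by linarith,
    (hball ⟨by linarith, le_rfl⟩).1.2, half_pos hpos, fun x hx => (hball hx).2.le⟩

theorem exists_forall_abs_le_of_periodic {f : ℝ → ℝ} {p : ℝ} (hf : Periodic f p) (hp : p ≠ 0)
    (hcont : Continuous f) : ∃ C, ∀ x, |f x| ≤ C := by
  simpa using (hf.isBounded_of_continuous hp hcont).exists_norm_le

section

variable {g : ℝ → ℝ} {θ u v σ : ℕ → ℝ} {n : ℕ}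

theorem exists_isInterpolation_deriv_eq_zero (hθ : IsCirclePartition θ n)
    (hu : ∀ j < n, θ j < u j) (huv : ∀ j < n, u j < v j) (hv : ∀ j < n, v j < θ (j + 1))
    (hσ : ∀ j ≤ n, |σ j| = 1) (hσclosed : σ n = σ 0) :
    ∃ W : ℝ → ℝ, ContDiff ℝ ∞ W ∧ Periodic W (2 * π) ∧ (∀ j ≤ n, W (θ j) = σ j) ∧
      ∀ j < n, ∀ x ∈ Ioo (θ j) (θ (j + 1)), x ∉ Icc (u j) (v j) → |W x| = 1 ∧ deriv W x = 0 := by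
  have hP : ∀ j < n, IsSmoothStep (smoothStep (u j) (v j)) (u j) (v j) := fun j hj =>
    isSmoothStep_smoothStep (huv j hj)
  have hu' : ∀ j < n, θ j ≤ u j := fun j hj => (hu j hj).le
  have hv' : ∀ j < n, v j ≤ θ (j + 1) := fun j hj => (hv j hj).le
  obtain ⟨W, hW⟩ := hθ.exists_isInterpolation hσclosed hP hu' hv'
  refine ⟨W, hW.contDiff, hW.periodic, fun j hj => hW.apply_partition hθ hP hu' hv' hj,
    fun j hj x hx hxuv => ?_⟩
  rw [hW.eq_on_arc j hj x (Ioo_subset_Icc_self hx),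
    hW.deriv_eq hj (fun x => (hP j hj).differentiableAt) hx]
  rcases lt_or_ge x (u j) with hxu | hxu
  · rw [(hP j hj).eq_zero x hxu.le, (hP j hj).deriv_eq_zero_of_le hxu.le]
    simp [hσ j hj.le]
  · have hxv : v j ≤ x := le_of_not_ge fun h => hxuv ⟨hxu, h⟩
    rw [(hP j hj).eq_one x hxv, (hP j hj).deriv_eq_zero_of_ge hxv]
    simp [hσ (j + 1) hj]

theorem exists_isZigzagOn_apply_eq (hθ : IsCirclePartition θ n) (hper : Periodic g (2 * π))
    (hz : IsZigzag (fun j => g (θ j)) n) :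
    ∃ Y : ℝ → ℝ, ContDiff ℝ ∞ Y ∧ Periodic Y (2 * π) ∧ IsZigzagOn Y θ n ∧
      ∀ j ≤ n, Y (θ j) = g (θ j) := by
  obtain ⟨Y, hY, hYper, hYzig, hYθ, -⟩ := hθ.exists_isZigzagOn_of_isSmoothStep hz
    (by simp only [hθ.last_eq, hper (θ 0)]) hθ.pos (isSmoothStep_smoothStep (hθ.lt_succ hθ.pos))
  exact ⟨Y, hY, hYper, hYzig, hYθ⟩

theorem exists_steep_subarcs (hg : ContDiff ℝ 1 g) (hθ : IsCirclePartition θ n)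
    (hz : IsZigzag (fun j => g (θ j)) n) :
    ∃ u v δ : ℕ → ℝ, ∀ j < n, θ j < u j ∧ u j < v j ∧ v j < θ (j + 1) ∧ 0 < δ j ∧
      ∀ x ∈ Icc (u j) (v j), δ j ≤ (-1) ^ (j + 1) * deriv g x := by
  have harc : ∀ j < n, ∃ u v δ, θ j < u ∧ u < v ∧ v < θ (j + 1) ∧ 0 < δ ∧
      ∀ x ∈ Icc u v, δ ≤ (-1) ^ (j + 1) * deriv g x := fun j hj => by
    have hsub := exists_subarc_forall_le_deriv (contDiff_const.mul hg) (hθ.lt_succ hj)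
      (sub_pos.1 (by simpa only [mul_sub] using hz j hj))
    simpa only [deriv_const_mul _ (hg.differentiable one_ne_zero _)] using hsub
  choose! u v δ h using harc
  exact ⟨u, v, δ, h⟩

theorem isZigzagOn_perturb {Y W : ℝ → ℝ} {δ : ℕ → ℝ} {η κ C : ℝ} (hg : Differentiable ℝ g)
    (hY : Differentiable ℝ Y) (hW : Differentiable ℝ W)
    (hmono : ∀ j < n, MonotoneOn (fun x => (-1 : ℝ) ^ (j + 1) * g x) (Icc (θ j) (θ (j + 1))))
    (hYzig : IsZigzagOn Y θ n) (hsteep : ∀ j < n, ∀ x ∈ Icc (u j) (v j),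
      δ j ≤ (-1) ^ (j + 1) * deriv g x) (hδ : ∀ j < n, 2 * C * κ < δ j)
    (hWflat : ∀ j < n, ∀ x ∈ Ioo (θ j) (θ (j + 1)), x ∉ Icc (u j) (v j) → deriv W x = 0)
    (hC : ∀ x, |deriv W x| ≤ C) (hκ : 0 < κ) (hη : η ∈ Ioo 0 (1 / 2)) :
    IsZigzagOn (fun x => (1 - η) * g x + η * Y x + κ * W x) θ n := by
  intro j hj x hx
  have hderiv : deriv (fun x => (1 - η) * g x + η * Y x + κ * W x) x =
      (1 - η) * deriv g x + η * deriv Y x + κ * deriv W x :=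
    ((((hg x).hasDerivAt.const_mul _).add ((hY x).hasDerivAt.const_mul _)).add
      ((hW x).hasDerivAt.const_mul _)).deriv
  have hg' : 0 ≤ (-1 : ℝ) ^ (j + 1) * deriv g x := by
    have := (hmono j hj).derivWithin_nonneg (x := x)
    rwa [derivWithin_of_mem_nhds (Icc_mem_nhds hx.1 hx.2), deriv_const_mul _ (hg x)] at this
  have hY' := mul_pos hη.1 (hYzig j hj x hx)
  have hη₁ := hη.2
  rw [hderiv]
  by_cases hxuv : x ∈ Icc (u j) (v j)
  · have hW' := (abs_le.1 ((abs_neg_one_pow_mul (j + 1) _).trans_le (hC x))).1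
    have hgδ := hsteep j hj x hxuv
    have hgW : 0 < (1 - η) * ((-1) ^ (j + 1) * deriv g x) + κ * ((-1) ^ (j + 1) * deriv W x) := by
      nlinarith [hδ j hj]
    linear_combination hY' + hgW
  · rw [hWflat j hj x hx hxuv]
    have hg'' : 0 ≤ (1 - η) * ((-1) ^ (j + 1) * deriv g x) := mul_nonneg (by linarith) hg'
    linear_combination hY' + hg''

theorem isZigzag_of_strictMonoOn (hθ : IsCirclePartition θ n)
    (hmono : ∀ j < n, StrictMonoOn (fun x => (-1 : ℝ) ^ (j + 1) * g x) (Icc (θ j) (θ (j + 1)))) :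
    IsZigzag (fun j => g (θ j)) n := fun j hj => by
  have hlt := hθ.lt_succ hj
  linear_combination hmono j hj (left_mem_Icc.2 hlt.le) (right_mem_Icc.2 hlt.le) hlt

/-- `(1 - η) g + η Y` has no degenerate arcs, and `κ W` separates it from `g`, except on the arcs
`[u j, v j]` where `g` is steep. -/
theorem exists_isZigzagOn_sub_eq (hg : ContDiff ℝ ∞ g) (hper : Periodic g (2 * π))
    (hθ : IsCirclePartition θ n) (hσ : ∀ j ≤ n, |σ j| = 1) (hσclosed : σ n = σ 0)
    (hmono : ∀ j < n, StrictMonoOn (fun x => (-1 : ℝ) ^ (j + 1) * g x) (Icc (θ j) (θ (j + 1))))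
    {ε : ℝ} (hε : 0 < ε) :
    ∃ (G : ℝ → ℝ) (κ : ℝ), 0 < κ ∧ κ < ε ∧ ContDiff ℝ ∞ G ∧ Periodic G (2 * π) ∧
      IsZigzagOn G θ n ∧ (∀ j ≤ n, g (θ j) - G (θ j) = κ * σ j) ∧
      ∀ j < n, ∀ x ∈ Ioo (θ j) (θ (j + 1)), g x = G x → 0 < (-1 : ℝ) ^ (j + 1) * deriv g x := by
  have hdiff : Differentiable ℝ g := hg.differentiable (by simp)
  have hz := isZigzag_of_strictMonoOn hθ hmono
  obtain ⟨u, v, δ, huv⟩ := exists_steep_subarcs (hg.of_le (by simp)) hθ hz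
  obtain ⟨Y, hY, hYper, hYzig, hYθ⟩ := exists_isZigzagOn_apply_eq hθ hper hz
  obtain ⟨W, hW, hWper, hWθ, hWflat⟩ := exists_isInterpolation_deriv_eq_zero (u := u) (v := v)
    (σ := fun j => -σ j) hθ (fun j hj => (huv j hj).1) (fun j hj => (huv j hj).2.1)
    (fun j hj => (huv j hj).2.2.1) (fun j hj => by rw [abs_neg, hσ j hj]) (by rw [hσclosed])
  obtain ⟨C, hC⟩ := exists_forall_abs_le_of_periodic (fun x => periodic_deriv hWper x)
    two_pi_pos.ne' (hW.continuous_deriv (by simp))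
  obtain ⟨D, hD⟩ := exists_forall_abs_le_of_periodic (f := fun x => Y x - g x)
    (fun x => by simp only [hYper x, hper x]) two_pi_pos.ne' (hY.continuous.sub hg.continuous)
  obtain ⟨κ, hκC, hκε, hκ⟩ := (((eventually_all_finite (finite_Iio n)).2 fun j hj =>
    eventually_mul_lt (2 * C) (huv j hj).2.2.2.1).and
      ((eventually_mul_lt 1 hε).and self_mem_nhdsWithin)).exists
  obtain ⟨η, hηD, hη₁, hη⟩ := ((eventually_mul_lt D hκ).and
    ((eventually_mul_lt 1 one_half_pos).and self_mem_nhdsWithin)).exists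
  rw [one_mul] at hκε hη₁
  refine ⟨fun x => (1 - η) * g x + η * Y x + κ * W x, κ, hκ, hκε, by fun_prop,
    fun x => by simp only [hper x, hYper x, hWper x],
    isZigzagOn_perturb hdiff (hY.differentiable (by simp)) (hW.differentiable (by simp))
      (fun j hj => (hmono j hj).monotoneOn) hYzig (fun j hj => (huv j hj).2.2.2.2) hκC
      (fun j hj x hx hxuv => (hWflat j hj x hx hxuv).2) hC hκ ⟨hη, hη₁⟩,
    fun j hj => by dsimp only; rw [hYθ j hj, hWθ j hj]; ring, fun j hj x hx heq => ?_⟩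
  by_cases hxuv : x ∈ Icc (u j) (v j)
  · exact (huv j hj).2.2.2.1.trans_le ((huv j hj).2.2.2.2 x hxuv)
  · have hbalance : κ * |W x| = η * |Y x - g x| := by
      have hopp : κ * W x = -(η * (Y x - g x)) := by linear_combination -heq
      simpa only [abs_neg, abs_mul, abs_of_pos hκ, abs_of_pos hη] using congrArg abs hopp
    rw [(hWflat j hj x hx hxuv).1] at hbalance
    have := mul_le_mul_of_nonneg_left (hD x) (le_of_lt hη)
    linarith

end

theorem IsRealizable.exists_regularPolarExtension {g : ℝ → ℝ} {θ : ℕ → ℝ} {n : ℕ}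
    (h : IsRealizable n fun j => g (θ j)) (hg : ContDiff ℝ ∞ g) (hper : Periodic g (2 * π))
    (hθ : IsCirclePartition θ n)
    (hmono : ∀ j < n, StrictMonoOn (fun x => (-1 : ℝ) ^ (j + 1) * g x) (Icc (θ j) (θ (j + 1)))) :
    ∃ v, Nonempty (RegularPolarExtension g v) := by
  obtain ⟨σ, hσ, hσclosed, ε, hε, hreal⟩ := h
  obtain ⟨G, κ, hκ, hκε, hG, hGper, hGzig, hknot, harc⟩ :=
    exists_isZigzagOn_sub_eq hg hper hθ hσ hσclosed hmono hε
  obtain ⟨v, ⟨F⟩, hv⟩ := hreal G θ hG hGper hθ hGzig fun j hj => by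
    rwa [abs_sub_comm, hknot j hj, abs_mul, hσ j hj, mul_one, abs_of_pos hκ]
  refine ⟨_, F.nonempty_attach_of_isZigzagOn hg hper hθ hGzig (fun j hj => ?_) harc⟩
  rw [hknot j hj.le, mul_left_comm]
  exact mul_pos hκ (hv j hj.le)

/-! ### Zigzags with few absolute extrema -/

/-- The indices `j < n` with `d j = 0`. -/
def zerosBelow (d : ℕ → ℝ) (n : ℕ) : Finset ℕ := {j ∈ Finset.range n | d j = 0}

theorem mem_zerosBelow {d : ℕ → ℝ} {n j : ℕ} : j ∈ zerosBelow d n ↔ j < n ∧ d j = 0 := by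
  rw [zerosBelow, Finset.mem_filter, Finset.mem_range]

theorem card_zerosBelow_comp_skipPair_le (d : ℕ → ℝ) (n k : ℕ) :
    (zerosBelow (fun j => d (skipPair k j)) n).card ≤
      (zerosBelow d (n + 2) \ {k + 1, k + 2}).card := by
  refine Finset.card_le_card_of_injOn (skipPair k) (fun j hj => ?_)
    (skipPair_strictMono k).injective.injOn
  obtain ⟨hjn, hdj⟩ := mem_zerosBelow.1 hj
  rw [Finset.mem_coe, Finset.mem_sdiff, mem_zerosBelow, Finset.mem_insert, Finset.mem_singleton]
  unfold skipPair at hdj ⊢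
  grind

/-- Abstraction of a zigzag of `2 N` values that attains its absolute minimum and starts at its
absolute maximum: `d j` is the distance of the `j`-th value to the maximum if `j` is even, to the
minimum if `j` is odd, and at most `N + 1` of these distances vanish. -/
structure IsSparselyExtremal (d : ℕ → ℝ) (N : ℕ) : Prop where
  nonneg : ∀ j ≤ 2 * N, 0 ≤ d j
  zero : d 0 = 0
  last : d (2 * N) = 0
  exists_odd : ∃ j < 2 * N, Odd j ∧ d j = 0
  card_le : (zerosBelow d (2 * N)).card ≤ N + 1

theorem exists_mem_succ_mem_of_lt_card {S : Finset ℕ} {N : ℕ} (hS : ∀ j ∈ S, j < 2 * N)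
    (h : N < S.card) : ∃ k ∈ S, k + 1 ∈ S := by
  obtain ⟨a, ha, b, hb, hne, hab⟩ := Finset.exists_ne_map_eq_of_card_lt_of_maps_to
    (s := S) (t := Finset.range N) (f := fun j => j / 2) (by rwa [Finset.card_range])
    (fun j hj => by rw [Finset.mem_coe, Finset.mem_range]; have := hS j hj; dsimp only; omega)
  rcases hne.lt_or_gt with hlt | hlt
  · exact ⟨a, ha, by rwa [show a + 1 = b by omega]⟩
  · exact ⟨b, hb, by rwa [show b + 1 = a by omega]⟩

theorem exists_succ_and_not_iff {p : ℕ → Prop} {k x n : ℕ} (hk : p k ∧ p (k + 1)) (hkn : k + 1 ≤ n)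
    (hx : ¬p x) (hxn : x ≤ n) : ∃ j, j + 2 ≤ n ∧ p (j + 1) ∧ ¬(p j ↔ p (j + 2)) := by
  classical
  have hex : ∃ k, p k ∧ p (k + 1) := ⟨k, hk⟩
  have hle : Nat.find hex ≤ k := Nat.find_min' hex hk
  obtain ⟨hfirst, hsecond⟩ := Nat.find_spec hex
  rcases hfind : Nat.find hex with - | a <;> rw [hfind] at hfirst hsecond hle
  · have hex' : ∃ x, ¬p x := ⟨x, hx⟩
    have hle' : Nat.find hex' ≤ x := Nat.find_min' hex' hx
    have hspec := Nat.find_spec hex'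
    have hmin (j : ℕ) (hj : j < Nat.find hex') : p j := not_not.1 (Nat.find_min hex' hj)
    rcases hfind' : Nat.find hex' with - | - | b <;> rw [hfind'] at hspec hmin hle'
    · exact absurd hfirst hspec
    · exact absurd hsecond hspec
    · exact ⟨b, by omega, hmin _ (by omega), fun h => hspec (h.1 (hmin _ (by omega)))⟩
  · have hmin := Nat.find_min hex (m := a) (by omega)
    exact ⟨a, by omega, hfirst, fun h => hmin ⟨h.2 hsecond, hfirst⟩⟩

namespace IsSparselyExtremal

variable {d : ℕ → ℝ} {N j k : ℕ}

theorem comp_skipPair (h : IsSparselyExtremal d (N + 2)) (hk : k < 2 * N + 2)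
    (hodd : ∃ i < 2 * N + 4, Odd i ∧ d i = 0 ∧ i ≠ k + 1 ∧ i ≠ k + 2)
    (hcard : (zerosBelow d (2 * N + 4)).card ≤ N + 2 ∨
      ∃ i, (i = k + 1 ∨ i = k + 2) ∧ d i = 0) :
    IsSparselyExtremal (fun j => d (skipPair k j)) (N + 1) where
  nonneg j hj := h.nonneg _ (skipPair_le hj)
  zero := h.zero
  last := by rw [skipPair_of_lt (by omega)]; exact h.last
  exists_odd := by
    obtain ⟨i, hi, hiodd, hdi, hne₁, hne₂⟩ := hodd
    rcases le_or_gt i k with hik | hik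
    · exact ⟨i, by omega, hiodd, by rwa [skipPair_of_le hik]⟩
    · obtain ⟨r, hr⟩ := hiodd
      exact ⟨i - 2, by omega, ⟨r - 1, by omega⟩, by
        rwa [skipPair_of_lt (by omega), show i - 2 + 2 = i by omega]⟩
  card_le := by
    refine (card_zerosBelow_comp_skipPair_le d _ k).trans ?_
    rcases hcard with hcard | ⟨i, hi, hdi⟩
    · exact (Finset.card_le_card Finset.sdiff_subset).trans hcard
    · have hmem : i ∈ zerosBelow d (2 * N + 4) := mem_zerosBelow.2 ⟨by omega, hdi⟩
      have hsub : zerosBelow d (2 * N + 4) \ {k + 1, k + 2} ⊆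
          (zerosBelow d (2 * N + 4)).erase i := fun x hx => by
        simp only [Finset.mem_sdiff, Finset.mem_insert, Finset.mem_singleton] at hx
        exact Finset.mem_erase.2 ⟨by omega, hx.1⟩
      have hle := Finset.card_le_card hsub
      rw [Finset.card_erase_of_mem hmem] at hle
      have : (zerosBelow d (2 * N + 4)).card ≤ N + 3 := h.card_le
      exact hle.trans (by omega)

theorem exists_comp_skipPair_of_ne (h : IsSparselyExtremal d (N + 2)) (hj : j + 2 ≤ 2 * N + 4)
    (hne : d j ≠ d (j + 2)) (hodd : ∃ i < 2 * N + 4, Odd i ∧ d i = 0 ∧ i ≠ j + 1)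
    (hcard : (zerosBelow d (2 * N + 4)).card ≤ N + 2 ∨ d (j + 1) = 0) :
    ∃ k < 2 * N + 2, (d k < d (k + 2) ∨ d (k + 3) < d (k + 1)) ∧
      IsSparselyExtremal (fun j => d (skipPair k j)) (N + 1) := by
  obtain ⟨i, hi, hiodd, hdi, hij⟩ := hodd
  rcases hne.lt_or_gt with hlt | hlt
  · have hpos := (h.nonneg j (by omega)).trans_lt hlt
    have hj' : j + 2 ≠ 2 * N + 4 := fun heq => hpos.ne' (heq ▸ h.last)
    exact ⟨j, by omega, Or.inl hlt, h.comp_skipPair (by omega)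
      ⟨i, hi, hiodd, hdi, hij, fun heq => hpos.ne' (heq ▸ hdi)⟩
      (hcard.imp_right fun hd => ⟨j + 1, Or.inl rfl, hd⟩)⟩
  · have hpos := (h.nonneg (j + 2) (by omega)).trans_lt hlt
    obtain - | k := j
    · exact absurd h.zero hpos.ne'
    · exact ⟨k, by omega, Or.inr hlt, h.comp_skipPair (by omega)
        ⟨i, hi, hiodd, hdi, fun heq => hpos.ne' (heq ▸ hdi), hij⟩
        (hcard.imp_right fun hd => ⟨k + 2, Or.inr rfl, hd⟩)⟩

theorem exists_odd_ne_add_two (h : IsSparselyExtremal d (N + 2))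
    (hcard : (zerosBelow d (2 * N + 4)).card ≤ N + 2) :
    ∃ j, j + 2 ≤ 2 * N + 4 ∧ Odd j ∧ d j ≠ d (j + 2) := by
  by_contra! hcon
  have hall (r : ℕ) (hr : r < N + 2) : d (2 * r + 1) = d 1 := by
    induction r with
    | zero => rfl
    | succ r ih => rw [← ih (by omega), hcon (2 * r + 1) (by omega) ⟨r, rfl⟩]; rfl
  have hone : d 1 = 0 := by
    obtain ⟨i, hi, ⟨r, rfl⟩, hdi⟩ := h.exists_odd
    rw [← hall r (by omega), hdi]
  have hsub : insert 0 ((Finset.range (N + 2)).image fun r => 2 * r + 1) ⊆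
      zerosBelow d (2 * N + 4) := fun x hx => by
    rw [Finset.mem_insert, Finset.mem_image] at hx
    obtain rfl | ⟨r, hr, rfl⟩ := hx
    · exact mem_zerosBelow.2 ⟨by omega, h.zero⟩
    · rw [Finset.mem_range] at hr
      exact mem_zerosBelow.2 ⟨by omega, (hall r hr).trans hone⟩
  have hle := Finset.card_le_card hsub
  rw [Finset.card_insert_of_notMem (by simp), Finset.card_image_of_injective _
    (fun a b hab => by grind), Finset.card_range] at hle
  omega

theorem exists_odd_ne (h : IsSparselyExtremal d (N + 2))
    (hcard : (zerosBelow d (2 * N + 4)).card = N + 3) {x : ℕ} (hx : d x ≠ 0) (hxn : x ≤ 2 * N + 4)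
    (hxj : x = j ∨ x = j + 2) : ∃ i < 2 * N + 4, Odd i ∧ d i = 0 ∧ i ≠ j + 1 := by
  rcases Nat.even_or_odd x with hxeven | hxodd
  · by_contra! hcon
    have hmaps : MapsTo (fun i => i / 2) ((zerosBelow d (2 * N + 4)).erase (j + 1))
        ((Finset.range (N + 2)).erase (x / 2)) := fun i hi => by
      obtain ⟨hij, hi'⟩ := Finset.mem_erase.1 (Finset.mem_coe.1 hi)
      obtain ⟨hin, hdi⟩ := mem_zerosBelow.1 hi'
      have hix : i ≠ x := fun heq => hx (heq ▸ hdi)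
      have hi₂ := mt (hcon i hin · hdi) hij
      rw [Finset.mem_coe, Finset.mem_erase, Finset.mem_range]
      grind
    have hinj : InjOn (fun i => i / 2) ((zerosBelow d (2 * N + 4)).erase (j + 1)) :=
      fun a ha b hb hab => by
        obtain ⟨haj, ha'⟩ := Finset.mem_erase.1 (Finset.mem_coe.1 ha)
        obtain ⟨hbj, hb'⟩ := Finset.mem_erase.1 (Finset.mem_coe.1 hb)
        have ha₂ := mt (hcon a (mem_zerosBelow.1 ha').1 · (mem_zerosBelow.1 ha').2) haj
        have hb₂ := mt (hcon b (mem_zerosBelow.1 hb').1 · (mem_zerosBelow.1 hb').2) hbj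
        grind
    have hle := Finset.card_le_card_of_injOn _ hmaps hinj
    have hxlt : x ≠ 2 * N + 4 := fun heq => hx (heq ▸ h.last)
    rw [Finset.card_erase_of_mem (Finset.mem_range.2 (by grind : x / 2 < N + 2)),
      Finset.card_range] at hle
    have := Finset.pred_card_le_card_erase (s := zerosBelow d (2 * N + 4)) (a := j + 1)
    omega
  · obtain ⟨i, hi, hiodd, hdi⟩ := h.exists_odd
    exact ⟨i, hi, hiodd, hdi, by grind⟩

theorem exists_comp_skipPair (h : IsSparselyExtremal d (N + 2)) :
    ∃ k < 2 * N + 2, (d k < d (k + 2) ∨ d (k + 3) < d (k + 1)) ∧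
      IsSparselyExtremal (fun j => d (skipPair k j)) (N + 1) := by
  rcases (show (zerosBelow d (2 * N + 4)).card ≤ N + 3 from h.card_le).lt_or_eq with hlt | heq
  · obtain ⟨j, hj, hjodd, hne⟩ := h.exists_odd_ne_add_two (Nat.lt_succ_iff.1 hlt)
    obtain ⟨i, hi, hiodd, hdi⟩ := h.exists_odd
    exact h.exists_comp_skipPair_of_ne hj hne ⟨i, hi, hiodd, hdi, by grind⟩
      (Or.inl (Nat.lt_succ_iff.1 hlt))
  · obtain ⟨k, hk, hk'⟩ := exists_mem_succ_mem_of_lt_card (N := N + 2)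
      (S := zerosBelow d (2 * N + 4)) (fun j hj => (mem_zerosBelow.1 hj).1) (by omega)
    obtain ⟨x, hx, hdx⟩ : ∃ x < 2 * N + 4, d x ≠ 0 := by
      by_contra! hzero
      have hall : zerosBelow d (2 * N + 4) = Finset.range (2 * N + 4) :=
        Finset.filter_true_of_mem fun j hj => hzero j (Finset.mem_range.1 hj)
      rw [hall, Finset.card_range] at heq
      omega
    rw [mem_zerosBelow] at hk hk'
    obtain ⟨j, hj, hdj, hiff⟩ := exists_succ_and_not_iff (p := fun j => d j = 0)
      ⟨hk.2, hk'.2⟩ hk'.1.le hdx hx.le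
    have hodd : ∃ i < 2 * N + 4, Odd i ∧ d i = 0 ∧ i ≠ j + 1 := by
      by_cases h₀ : d j = 0
      · exact h.exists_odd_ne heq (fun h₂ => hiff (iff_of_true h₀ h₂)) hj (Or.inr rfl)
      · exact h.exists_odd_ne heq h₀ (by omega) (Or.inl rfl)
    exact h.exists_comp_skipPair_of_ne hj (fun hd => hiff (by rw [hd])) hodd (Or.inr hdj)

end IsSparselyExtremal

/-- The distance of `y j` to the maximal value `M` if `j` is even, to the minimal value `m` if `j`
is odd. -/
def shortfall (m M : ℝ) (y : ℕ → ℝ) (j : ℕ) : ℝ := if Even j then M - y j else y j - m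

theorem shortfall_comp_skipPair (m M : ℝ) (y : ℕ → ℝ) (k : ℕ) :
    shortfall m M (fun j => y (skipPair k j)) = fun j => shortfall m M y (skipPair k j) := by
  funext j
  unfold shortfall skipPair
  grind

theorem shortfall_sub_shortfall_add_two (m M : ℝ) (y : ℕ → ℝ) (k : ℕ) :
    shortfall m M y (k + 2) - shortfall m M y k = (-1) ^ (k + 1) * (y (k + 2) - y k) := by
  rcases Nat.even_or_odd k with hk | hk
  · simp only [shortfall, hk, hk.add even_two, if_true, hk.add_one.neg_one_pow]
    ring
  · simp only [shortfall, Nat.not_even_iff_odd.2 hk, Nat.not_even_iff_odd.2 (hk.add_even even_two),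
      if_false, hk.add_one.neg_one_pow]
    ring

theorem exists_isCancellable_of_shortfall {m M : ℝ} {y : ℕ → ℝ} {k : ℕ}
    (h : shortfall m M y k < shortfall m M y (k + 2) ∨
      shortfall m M y (k + 3) < shortfall m M y (k + 1)) : ∃ s, IsCancellable y k s 0 := by
  rcases h with h | h
  · exact ⟨_, Or.inl ⟨rfl, by rw [← shortfall_sub_shortfall_add_two m M]; linarith⟩⟩
  · have := shortfall_sub_shortfall_add_two m M y (k + 1)
    rw [pow_succ] at this
    exact ⟨_, Or.inr ⟨rfl, by linarith⟩⟩

theorem IsSparselyExtremal.isRealizable {m M : ℝ} {y : ℕ → ℝ} {N : ℕ}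
    (h : IsSparselyExtremal (shortfall m M y) (N + 1)) (hy : IsZigzag y (2 * (N + 1))) :
    IsRealizable (2 * (N + 1)) y := by
  induction N generalizing y with
  | zero => exact isRealizable_two y
  | succ N ih =>
    obtain ⟨k, hk, hlt, hrest⟩ := h.exists_comp_skipPair
    obtain ⟨s, hs⟩ := exists_isCancellable_of_shortfall hlt
    rw [← shortfall_comp_skipPair] at hrest
    exact (ih hrest (IsZigzag.comp_skipPair hy hk hs)).of_comp_skipPair hy hk hs

/-! ### The partition of the circle by the local extrema -/

theorem encard_sep_Ico_le_of_periodic {p : ℝ → Prop} {c : ℝ} (hp : Periodic p c) (hc : 0 < c)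
    (a b : ℝ) : {t ∈ Ico a (a + c) | p t}.encard ≤ {t ∈ Ico b (b + c) | p t}.encard := by
  refine encard_le_encard_of_injOn (f := toIcoMod hc b) (fun t ht => ⟨toIcoMod_mem_Ico hc b t, ?_⟩)
    fun x hx y hy hxy => ?_
  · rw [toIcoMod, hp.sub_zsmul_eq]
    exact ht.2
  · rw [← (toIcoMod_eq_self hc).2 hx.1, ← (toIcoMod_eq_self hc).2 hy.1,
      ← toIcoMod_toIcoMod hc a b x, hxy, toIcoMod_toIcoMod]

theorem encard_sep_Ico_eq_of_periodic {p : ℝ → Prop} {c : ℝ} (hp : Periodic p c) (hc : 0 < c)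
    (a b : ℝ) : {t ∈ Ico a (a + c) | p t}.encard = {t ∈ Ico b (b + c) | p t}.encard :=
  (encard_sep_Ico_le_of_periodic hp hc a b).antisymm (encard_sep_Ico_le_of_periodic hp hc b a)

theorem isLocalExtr_add_of_periodic {g : ℝ → ℝ} {c t : ℝ} (hper : Periodic g c)
    (h : IsLocalExtr g t) : IsLocalExtr g (t + c) := by
  rw [← add_sub_cancel_right t c] at h
  have := h.comp_continuous (g := fun x => x - c) (by fun_prop)
  rwa [show g ∘ (fun x => x - c) = g from funext hper.sub_eq] at this

theorem periodic_isLocalExtr {g : ℝ → ℝ} {c : ℝ} (hper : Periodic g c) :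
    Periodic (IsLocalExtr g) c := fun t => propext
  ⟨fun h => by simpa using isLocalExtr_add_of_periodic hper.neg h,
    isLocalExtr_add_of_periodic hper⟩

theorem exists_isGreatest_range_of_periodic {g : ℝ → ℝ} {c : ℝ} (hg : Continuous g)
    (hper : Periodic g c) (hc : 0 < c) : ∃ M, IsGreatest (range g) M := by
  rw [← hper.image_Icc hc 0]
  exact (isCompact_Icc.image hg).exists_isGreatest ((nonempty_Icc.2 (by linarith)).image g)

theorem exists_isLeast_range_of_periodic {g : ℝ → ℝ} {c : ℝ} (hg : Continuous g)
    (hper : Periodic g c) (hc : 0 < c) : ∃ m, IsLeast (range g) m := by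
  rw [← hper.image_Icc hc 0]
  exact (isCompact_Icc.image hg).exists_isLeast ((nonempty_Icc.2 (by linarith)).image g)

theorem not_isLocalExtr_of_strictMonoOn {g : ℝ → ℝ} {a b c : ℝ} (hb : b ∈ Ioo a c)
    (h : StrictMonoOn g (Icc a c)) : ¬IsLocalExtr g b := by
  rintro (hmin | hmax)
  · obtain ⟨x, hx, hax, hxb⟩ := ((hmin.filter_mono nhdsWithin_le_nhds).and
      (Ioo_mem_nhdsLT hb.1)).exists
    exact (h ⟨hax.le, hxb.le.trans hb.2.le⟩ (Ioo_subset_Icc_self hb) hxb).not_ge hx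
  · obtain ⟨x, hx, hbx, hxc⟩ := ((hmax.filter_mono nhdsWithin_le_nhds).and
      (Ioo_mem_nhdsGT hb.2)).exists
    exact (h (Ioo_subset_Icc_self hb) ⟨hb.1.le.trans hbx.le, hxc.le⟩ hbx).not_ge hx

theorem strictMonoOn_or_strictAntiOn_of_not_isLocalExtr {g : ℝ → ℝ} {a b : ℝ}
    (hg : ContinuousOn g (Icc a b)) (hab : a ≤ b) (h : ∀ x ∈ Ioo a b, ¬IsLocalExtr g x) :
    StrictMonoOn g (Icc a b) ∨ StrictAntiOn g (Icc a b) := by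
  have hne (x : ℝ) (hx : x ∈ Icc a b) (y : ℝ) (hy : y ∈ Icc a b) (hxy : x < y) : g x ≠ g y := by
    intro heq
    obtain ⟨c, hc, hextr⟩ := exists_isLocalExtr_Ioo hxy (hg.mono (Icc_subset_Icc hx.1 hy.2)) heq
    exact h c ⟨hx.1.trans_lt hc.1, hc.2.trans_le hy.2⟩ hextr
  refine hg.strictMonoOn_of_injOn_Icc' hab fun x hx y hy heq => ?_
  rcases lt_trichotomy x y with hlt | rfl | hgt
  · exact absurd heq (hne x hx y hy hlt)
  · rfl
  · exact absurd heq.symm (hne y hy x hx hgt)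

theorem isLocalExtr_neg_one_pow_mul_iff {g : ℝ → ℝ} {x : ℝ} (j : ℕ) :
    IsLocalExtr (fun y => (-1 : ℝ) ^ j * g y) x ↔ IsLocalExtr g x := by
  rcases neg_one_pow_eq_or ℝ j with hj | hj
  · simp only [hj, one_mul]
  · simp only [hj, neg_one_mul]
    exact ⟨fun h => by simpa only [neg_neg] using h.neg, IsLocalExtr.neg⟩

theorem exists_isCirclePartition_mem_iff {F : Finset ℝ} {a : ℝ} (ha : a ∈ F)
    (hF : ∀ x ∈ F, x ∈ Ico a (a + 2 * π)) :
    ∃ θ, IsCirclePartition θ F.card ∧ θ 0 = a ∧ ∀ x, x ∈ F ↔ ∃ j < F.card, θ j = x := by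
  set e := F.orderEmbOfFin rfl
  have he (i : Fin F.card) : e i ∈ F := F.orderEmbOfFin_mem rfl i
  have hsurj (x : ℝ) (hx : x ∈ F) : ∃ i, e i = x := by
    rwa [← Finset.mem_coe, ← F.range_orderEmbOfFin rfl] at hx
  set θ : ℕ → ℝ := fun j => if h : j < F.card then e ⟨j, h⟩ else a + 2 * π
  have hθlt (j : ℕ) (h : j < F.card) : θ j = e ⟨j, h⟩ := dif_pos h
  have hθlast : θ F.card = a + 2 * π := dif_neg (lt_irrefl _)
  have hcard : 0 < F.card := Finset.card_pos.2 ⟨a, ha⟩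
  have hθzero : θ 0 = a := by
    obtain ⟨i, hi⟩ := hsurj a ha
    refine le_antisymm ?_ (hθlt 0 hcard ▸ (hF _ (he _)).1)
    rw [hθlt 0 hcard, ← hi]
    exact e.monotone (Nat.zero_le i.1)
  refine ⟨θ, ⟨fun i _ j hj hij => ?_, by rw [hθlast, hθzero]⟩, hθzero, fun x => ⟨fun hx => ?_, ?_⟩⟩
  · have hi' : i < F.card := hij.trans_le hj
    rw [hθlt i hi']
    rcases (mem_Iic.1 hj).lt_or_eq with hj' | rfl
    · rw [hθlt j hj']
      exact e.strictMono (Fin.mk_lt_mk.2 hij)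
    · rw [hθlast]
      exact (hF _ (he _)).2
  · obtain ⟨i, rfl⟩ := hsurj x hx
    exact ⟨i, i.2, hθlt i i.2⟩
  · rintro ⟨j, hj, rfl⟩
    exact hθlt j hj ▸ he _

/-- The points `θ j` are the local extrema of `g` on the circle, starting from an absolute maximum;
hence `g` alternately decreases and increases on the arcs. -/
structure IsExtremalPartition (g : ℝ → ℝ) (θ : ℕ → ℝ) (n : ℕ) : Prop
    extends IsCirclePartition θ n where
  isGreatest : IsGreatest (range g) (g (θ 0))
  isLocalExtr_iff : ∀ x ∈ Ico (θ 0) (θ n), IsLocalExtr g x ↔ ∃ j < n, θ j = x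

theorem exists_isExtremalPartition {g : ℝ → ℝ} {n : ℕ} (hg : Continuous g)
    (hper : Periodic g (2 * π)) (hcard : {t ∈ Ico 0 (2 * π) | IsLocalExtr g t}.encard = n) :
    ∃ θ, IsExtremalPartition g θ n := by
  obtain ⟨-, ⟨a, rfl⟩, hmax⟩ := exists_isGreatest_range_of_periodic hg hper two_pi_pos
  have hcard' : {t ∈ Ico a (a + 2 * π) | IsLocalExtr g t}.encard = n := by
    rw [encard_sep_Ico_eq_of_periodic (periodic_isLocalExtr hper) two_pi_pos a 0, zero_add, hcard]
  have hfin := finite_of_encard_eq_coe hcard'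
  have ha : IsLocalExtr g a := Or.inr (Eventually.of_forall fun x => hmax (mem_range_self x))
  obtain ⟨θ, hθ, hθ₀, hmem⟩ := exists_isCirclePartition_mem_iff (F := hfin.toFinset) (a := a)
    (hfin.mem_toFinset.2 ⟨⟨le_rfl, by linarith [pi_pos]⟩, ha⟩) fun x hx =>
      (hfin.mem_toFinset.1 hx).1
  rw [hfin.encard_eq_coe_toFinset_card, Nat.cast_inj] at hcard'
  rw [hcard'] at hθ hmem
  refine ⟨θ, hθ, ⟨mem_range_self _, hθ₀ ▸ hmax⟩, fun x hx => ?_⟩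
  rw [hθ.last_eq, hθ₀] at hx
  rw [← hmem, hfin.mem_toFinset, mem_ofPred_eq, and_iff_right hx]

namespace IsExtremalPartition

variable {g : ℝ → ℝ} {θ : ℕ → ℝ} {n j : ℕ} {m : ℝ}

theorem mem_Ico (h : IsExtremalPartition g θ n) (hj : j < n) : θ j ∈ Ico (θ 0) (θ n) :=
  ⟨h.le j.zero_le hj.le, h.lt hj le_rfl⟩

theorem isLocalExtr (h : IsExtremalPartition g θ n) (hj : j < n) : IsLocalExtr g (θ j) :=
  (h.isLocalExtr_iff _ (h.mem_Ico hj)).2 ⟨j, hj, rfl⟩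

theorem apply_last (h : IsExtremalPartition g θ n) (hper : Periodic g (2 * π)) :
    g (θ n) = g (θ 0) := by rw [h.last_eq, hper]

theorem not_isLocalExtr (h : IsExtremalPartition g θ n) (hj : j < n) {x : ℝ}
    (hx : x ∈ Ioo (θ j) (θ (j + 1))) : ¬IsLocalExtr g x := by
  rw [h.isLocalExtr_iff x ⟨(h.le j.zero_le hj.le).trans hx.1.le, hx.2.trans_le (h.le hj le_rfl)⟩]
  rintro ⟨i, hi, rfl⟩
  rcases le_or_gt i j with hij | hij
  · exact (h.le hij hj.le).not_gt hx.1
  · exact (h.le hij hi.le).not_gt hx.2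

theorem strictMonoOn_arc_or (h : IsExtremalPartition g θ n) (hg : Continuous g) (hj : j < n) :
    StrictMonoOn (fun x => (-1 : ℝ) ^ j * g x) (Icc (θ j) (θ (j + 1))) ∨
      StrictMonoOn (fun x => (-1 : ℝ) ^ (j + 1) * g x) (Icc (θ j) (θ (j + 1))) := by
  refine (strictMonoOn_or_strictAntiOn_of_not_isLocalExtr (by fun_prop) (h.lt_succ hj).le
    fun x hx => (isLocalExtr_neg_one_pow_mul_iff j).not.2 (h.not_isLocalExtr hj hx)).imp_right
      fun hanti => ?_
  simpa only [pow_succ', neg_one_mul, neg_mul, one_mul] using hanti.neg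

theorem strictMonoOn_arc (h : IsExtremalPartition g θ n) (hg : Continuous g) (hj : j < n) :
    StrictMonoOn (fun x => (-1 : ℝ) ^ (j + 1) * g x) (Icc (θ j) (θ (j + 1))) := by
  have hlt := h.lt_succ hj
  induction j with
  | zero =>
    refine (h.strictMonoOn_arc_or hg hj).resolve_left fun hmono => ?_
    have hup : g (θ 0) < g (θ 1) := by
      simpa using hmono (left_mem_Icc.2 hlt.le) (right_mem_Icc.2 hlt.le) hlt
    exact hup.not_ge (h.isGreatest.2 (mem_range_self _))
  | succ j ih =>
    have hj' := j.lt_succ_self.trans hj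
    have hprev := h.lt_succ hj'
    refine (h.strictMonoOn_arc_or hg hj).resolve_left fun hmono => ?_
    refine not_isLocalExtr_of_strictMonoOn ⟨hprev, hlt⟩ ?_
      ((isLocalExtr_neg_one_pow_mul_iff (j + 1)).2 (h.isLocalExtr hj))
    rw [← Icc_union_Icc_eq_Icc hprev.le hlt.le]
    exact (ih hj' hprev).union hmono (isGreatest_Icc hprev.le) (isLeast_Icc hlt.le)

theorem apply_succ_lt (h : IsExtremalPartition g θ n) (hg : Continuous g) (hj : j < n)
    (heven : Even j) : g (θ (j + 1)) < g (θ j) := by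
  have hlt := h.lt_succ hj
  simpa [heven.add_one.neg_one_pow] using
    h.strictMonoOn_arc hg hj (left_mem_Icc.2 hlt.le) (right_mem_Icc.2 hlt.le) hlt

theorem apply_lt_succ (h : IsExtremalPartition g θ n) (hg : Continuous g) (hj : j < n)
    (hodd : Odd j) : g (θ j) < g (θ (j + 1)) := by
  have hlt := h.lt_succ hj
  simpa [hodd.add_one.neg_one_pow] using
    h.strictMonoOn_arc hg hj (left_mem_Icc.2 hlt.le) (right_mem_Icc.2 hlt.le) hlt

theorem even (h : IsExtremalPartition g θ n) (hg : Continuous g) (hper : Periodic g (2 * π)) :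
    Even n := by
  obtain ⟨k, rfl⟩ := Nat.exists_eq_succ_of_ne_zero h.pos.ne'
  by_contra hodd
  have hlt := h.apply_succ_lt hg k.lt_succ_self (by simpa [Nat.even_add_one] using hodd)
  rw [← Nat.succ_eq_add_one, h.apply_last hper] at hlt
  exact hlt.not_ge (h.isGreatest.2 (mem_range_self _))

theorem shortfall_nonneg (h : IsExtremalPartition g θ n) (hm : IsLeast (range g) m) (j : ℕ) :
    0 ≤ shortfall m (g (θ 0)) (fun j => g (θ j)) j := by
  unfold shortfall
  split_ifs
  · exact sub_nonneg.2 (h.isGreatest.2 (mem_range_self _))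
  · exact sub_nonneg.2 (hm.2 (mem_range_self _))

theorem shortfall_eq_zero_iff (h : IsExtremalPartition g θ n) (hg : Continuous g)
    (hm : IsLeast (range g) m) (hj : j < n) :
    shortfall m (g (θ 0)) (fun j => g (θ j)) j = 0 ↔
      (∀ u, g u ≤ g (θ j)) ∨ ∀ u, g (θ j) ≤ g u := by
  have hmax := h.isGreatest.2 (mem_range_self (θ j))
  have hmin := hm.2 (mem_range_self (θ j))
  obtain ⟨u, hu⟩ := hm.1
  rcases j.even_or_odd with hev | hodd
  · rw [shortfall, if_pos hev, sub_eq_zero,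
      or_iff_left fun hle => (h.apply_succ_lt hg hj hev).not_ge (hle _)]
    exact ⟨fun heq u => heq ▸ h.isGreatest.2 (mem_range_self u), fun hle => (hle _).antisymm hmax⟩
  · rw [shortfall, if_neg (Nat.not_even_iff_odd.2 hodd), sub_eq_zero,
      or_iff_right fun hle => (h.apply_lt_succ hg hj hodd).not_ge (hle _)]
    exact ⟨fun heq u => heq ▸ hm.2 (mem_range_self u), fun hle => (hu ▸ hle u).antisymm hmin⟩

theorem exists_eq_of_isAbsExtr (h : IsExtremalPartition g θ n) {t : ℝ} (ht : t ∈ Ico (θ 0) (θ n))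
    (habs : (∀ u, g u ≤ g t) ∨ ∀ u, g t ≤ g u) : ∃ j < n, θ j = t :=
  (h.isLocalExtr_iff t ht).1 (habs.symm.imp Eventually.of_forall Eventually.of_forall)

theorem card_zerosBelow_shortfall (h : IsExtremalPartition g θ n) (hg : Continuous g)
    (hper : Periodic g (2 * π)) (hm : IsLeast (range g) m) :
    ((zerosBelow (shortfall m (g (θ 0)) fun j => g (θ j)) n).card : ℕ∞) =
      {t ∈ Ico 0 (2 * π) | (∀ u, g u ≤ g t) ∨ ∀ u, g t ≤ g u}.encard := by
  have himage : θ '' zerosBelow (shortfall m (g (θ 0)) fun j => g (θ j)) n =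
      {t ∈ Ico (θ 0) (θ 0 + 2 * π) | (∀ u, g u ≤ g t) ∨ ∀ u, g t ≤ g u} := by
    ext t
    rw [← h.last_eq]
    constructor
    · rintro ⟨j, hj, rfl⟩
      obtain ⟨hjn, hj₀⟩ := mem_zerosBelow.1 hj
      exact ⟨h.mem_Ico hjn, (h.shortfall_eq_zero_iff hg hm hjn).1 hj₀⟩
    · rintro ⟨ht, habs⟩
      obtain ⟨j, hj, rfl⟩ := h.exists_eq_of_isAbsExtr ht habs
      exact ⟨j, mem_zerosBelow.2 ⟨hj, (h.shortfall_eq_zero_iff hg hm hj).2 habs⟩, rfl⟩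
  have hinj : InjOn θ (zerosBelow (shortfall m (g (θ 0)) fun j => g (θ j)) n) :=
    h.strictMonoOn.injOn.mono fun j hj => (mem_zerosBelow.1 hj).1.le
  rw [← encard_coe_eq_coe_finsetCard, ← hinj.encard_image, himage,
    encard_sep_Ico_eq_of_periodic (fun t => by rw [hper t]) two_pi_pos (θ 0) 0, zero_add]

theorem isSparselyExtremal {N : ℕ} (h : IsExtremalPartition g θ (2 * N)) (hg : Continuous g)
    (hper : Periodic g (2 * π)) (hm : IsLeast (range g) m)
    (hcard : (zerosBelow (shortfall m (g (θ 0)) fun j => g (θ j)) (2 * N)).card ≤ N + 1) :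
    IsSparselyExtremal (shortfall m (g (θ 0)) fun j => g (θ j)) N where
  nonneg j _ := h.shortfall_nonneg hm j
  zero := by simp [shortfall]
  last := by simp [shortfall, h.apply_last hper]
  exists_odd := by
    obtain ⟨t, rfl⟩ := hm.1
    obtain ⟨t', ht', heq⟩ := hper.exists_mem_Ico two_pi_pos t (θ 0)
    rw [← h.last_eq] at ht'
    have hmin (u : ℝ) : g t' ≤ g u := heq ▸ hm.2 (mem_range_self u)
    obtain ⟨j, hj, rfl⟩ := h.exists_eq_of_isAbsExtr ht' (Or.inr hmin)
    refine ⟨j, hj, ?_, (h.shortfall_eq_zero_iff hg hm hj).2 (Or.inr hmin)⟩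
    exact Nat.not_even_iff_odd.1 fun hev => (h.apply_succ_lt hg hj hev).not_ge (hmin _)
  card_le := hcard

theorem deriv_eq_zero (h : IsExtremalPartition g θ n) (hper : Periodic g (2 * π)) (hj : j ≤ n) :
    deriv g (θ j) = 0 := by
  rcases hj.lt_or_eq with hlt | rfl
  · exact (h.isLocalExtr hlt).deriv_eq_zero
  · refine IsLocalMax.deriv_eq_zero (Eventually.of_forall fun u => ?_)
    rw [h.apply_last hper]
    exact h.isGreatest.2 (mem_range_self u)

end IsExtremalPartition

/-! ### The obstruction to an extension without critical points -/

section NormedSpace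

variable {E : Type*} [NormedAddCommGroup E] [NormedSpace ℝ E]

theorem exists_continuous_exp_eq_on_closedBall {u : E → ℂ} (hu : Continuous u)
    (h₀ : ∀ x ∈ Metric.closedBall 0 1, u x ≠ 0) :
    ∃ L : E → ℂ, Continuous L ∧ ∀ x ∈ Metric.closedBall 0 1, Complex.exp (L x) = u x := by
  have hpos (x : E) : 0 < max 1 ‖x‖ := lt_max_of_lt_left one_pos
  set ρ : E → E := fun x => (max 1 ‖x‖)⁻¹ • x
  have hρ : Continuous ρ :=
    ((continuous_const.max continuous_norm).inv₀ fun x => (hpos x).ne').smul continuous_id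
  have hρ_mem (x : E) : ρ x ∈ Metric.closedBall 0 1 := by
    rw [mem_closedBall_zero_iff, norm_smul, norm_inv, norm_of_nonneg (hpos x).le,
      inv_mul_le_one₀ (hpos x)]
    exact le_max_right _ _
  obtain ⟨L, ⟨-, hL⟩, -⟩ := Complex.isCoveringMapOn_exp.existsUnique_continuousMap_lifts
    ⟨fun x => u (ρ x), hu.comp hρ⟩ (a₀ := 0) (Complex.exp_log (h₀ _ (hρ_mem 0)))
    fun x => h₀ _ (hρ_mem x)
  refine ⟨L, L.continuous, fun x hx => (congrFun hL x).trans ?_⟩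
  rw [mem_closedBall_zero_iff] at hx
  simp [ρ, max_eq_left hx]

theorem le_of_forall_sphere_le_of_fderiv_ne_zero [ProperSpace E] {f : E → ℝ} {c : E} {r M : ℝ}
    (hf : ContinuousOn f (Metric.closedBall c r)) (hcrit : ∀ x ∈ Metric.ball c r, fderiv ℝ f x ≠ 0)
    (hM : ∀ x ∈ Metric.sphere c r, f x ≤ M) {x : E} (hx : x ∈ Metric.closedBall c r) : f x ≤ M := by
  obtain ⟨y, hy, hmax⟩ := (isCompact_closedBall c r).exists_isMaxOn ⟨x, hx⟩ hf
  refine (hmax hx).trans (hM y ((Metric.mem_closedBall.1 hy).eq_of_not_lt fun hlt => ?_))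
  refine hcrit y hlt (hmax.isLocalMax ?_).fderiv_eq_zero
  exact mem_of_superset (Metric.isOpen_ball.mem_nhds hlt) Metric.ball_subset_closedBall

theorem fderiv_self_nonneg_of_forall_sphere_le [ProperSpace E] {f : E → ℝ} {r : ℝ} {p : E}
    (hf : Differentiable ℝ f) (hcrit : ∀ x ∈ Metric.ball 0 r, fderiv ℝ f x ≠ 0)
    (hp : p ∈ Metric.sphere 0 r) (hmax : ∀ x ∈ Metric.sphere 0 r, f x ≤ f p) :
    0 ≤ fderiv ℝ f p p := by
  have hp' := Metric.sphere_subset_closedBall hp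
  have hmaxOn : IsMaxOn f (Metric.closedBall 0 r) p := fun x hx =>
    le_of_forall_sphere_le_of_fderiv_ne_zero hf.continuous.continuousOn hcrit hmax hx
  have hr : 0 ≤ r := (norm_nonneg p).trans (mem_closedBall_zero_iff.1 hp')
  have hcone := sub_mem_posTangentConeAt_of_segment_subset
    ((convex_closedBall (0 : E) r).segment_subset hp' (Metric.mem_closedBall_self hr))
  have := hmaxOn.localize.hasFDerivWithinAt_nonpos (hf p).hasFDerivAt.hasFDerivWithinAt hcone
  simpa using this

end NormedSpace

theorem sphPt_eq_cos_smul_add_sin_smul (t : ℝ) :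
    sphPt t = cos t • sphPt 0 + sin t • sphPt (π / 2) := by
  ext i
  fin_cases i <;> simp [sphPt]

theorem clm_apply_sphPt (l : E2 →L[ℝ] ℝ) (t : ℝ) :
    l (sphPt t) = cos t * l (sphPt 0) + sin t * l (sphPt (π / 2)) := by
  simpa using congrArg l (sphPt_eq_cos_smul_add_sin_smul t)

theorem exists_phase_of_ne_zero {D : E2 → E2 →L[ℝ] ℝ} (hD : Continuous D)
    (h₀ : ∀ x ∈ Metric.closedBall 0 1, D x ≠ 0) :
    ∃ α r : E2 → ℝ, Continuous α ∧ (∀ x, 0 < r x) ∧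
      ∀ x ∈ Metric.closedBall 0 1, ∀ t, D x (sphPt t) = r x * cos (α x - t) := by
  obtain ⟨L, hL, hexp⟩ := exists_continuous_exp_eq_on_closedBall
    (u := fun x => ⟨D x (sphPt 0), D x (sphPt (π / 2))⟩)
    (Complex.equivRealProdCLM.symm.continuous.comp
      ((hD.clm_apply continuous_const).prodMk (hD.clm_apply continuous_const))) fun x hx hzero => by
    obtain ⟨hre, him⟩ := Complex.ext_iff.1 hzero
    dsimp only [Complex.zero_re, Complex.zero_im] at hre him
    refine h₀ x hx (ContinuousLinearMap.ext fun v => ?_)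
    rw [← norm_smul_sphPt_polarAngle v, map_smul, clm_apply_sphPt, hre, him]
    simp
  refine ⟨fun x => (L x).im, fun x => exp (L x).re, Complex.continuous_im.comp hL,
    fun x => exp_pos _, fun x hx t => ?_⟩
  have hre := Complex.exp_re (L x)
  have him := Complex.exp_im (L x)
  rw [hexp x hx] at hre him
  dsimp only at hre him
  rw [clm_apply_sphPt, hre, him, cos_sub]
  ring

theorem exists_phase_on_circle {f : E2 → ℝ} (hf : ContDiff ℝ 1 f)
    (hcrit : ∀ x ∈ Metric.closedBall 0 1, fderiv ℝ f x ≠ 0) :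
    ∃ ψ r : ℝ → ℝ, Continuous ψ ∧ (∀ t, 0 < r t) ∧ (∀ t, ψ (t + 2 * π) = ψ t - 2 * π) ∧
      (∀ t, deriv (fun t => f (sphPt t)) t = r t * sin (ψ t)) ∧
      ∀ t, fderiv ℝ f (sphPt t) (sphPt t) = r t * cos (ψ t) := by
  obtain ⟨α, r, hα, hr, hD⟩ := exists_phase_of_ne_zero (hf.continuous_fderiv one_ne_zero) hcrit
  have hmem (t : ℝ) : sphPt t ∈ Metric.closedBall 0 1 := by
    rw [mem_closedBall_zero_iff, norm_sphPt]
  refine ⟨fun t => α (sphPt t) - t, fun t => r (sphPt t),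
    (hα.comp contDiff_sphPt.continuous).sub continuous_id, fun t => hr _, fun t => ?_, fun t => ?_,
    fun t => hD _ (hmem t) t⟩
  · simp only [sphPt, cos_add_two_pi, sin_add_two_pi]
    ring
  · have hderiv := ((hf.differentiable one_ne_zero) (sphPt t)).hasFDerivAt.comp_hasDerivAt t
      (hasDerivAt_sphPt t)
    rw [show (fun t => f (sphPt t)) = f ∘ sphPt from rfl, hderiv.deriv, hD _ (hmem t), ← sub_sub,
      cos_sub_pi_div_two]

theorem mul_fderiv_sphPt_nonneg {f : E2 → ℝ} {c t : ℝ} (hf : Differentiable ℝ f)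
    (hcrit : ∀ x ∈ Metric.closedBall 0 1, fderiv ℝ f x ≠ 0) (hc : c ≠ 0)
    (hmax : ∀ u, c * f (sphPt u) ≤ c * f (sphPt t)) :
    0 ≤ c * fderiv ℝ f (sphPt t) (sphPt t) := by
  have hfderiv (x : E2) : fderiv ℝ (fun x => c * f x) x = c • fderiv ℝ f x :=
    fderiv_const_mul (hf x) c
  rw [← smul_eq_mul, ← smul_apply, ← hfderiv]
  refine fderiv_self_nonneg_of_forall_sphere_le (r := 1) (hf.const_mul c) (fun x hx => ?_)
    (by rw [mem_sphere_zero_iff_norm, norm_sphPt]) fun x hx => ?_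
  · rw [hfderiv]
    exact smul_ne_zero hc (hcrit x (Metric.ball_subset_closedBall hx))
  · rw [← norm_smul_sphPt_polarAngle x, mem_sphere_zero_iff_norm.1 hx, one_smul]
    exact hmax _

theorem ediv_two_le_ediv_two_of_sin_nonneg {ψ : ℝ → ℝ} {a b : ℝ} {A B : ℤ}
    (hψ : ContinuousOn ψ (uIcc a b)) (hsin : ∀ t ∈ uIcc a b, 0 ≤ sin (ψ t)) (hA : ψ a = A * π)
    (hB : ψ b = B * π) : B / 2 ≤ A / 2 := by
  by_contra! hlt
  have hA' : A ≤ 2 * (B / 2) - 1 := by omega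
  have hB' : 2 * (B / 2) ≤ B := by omega
  generalize B / 2 = q at hA' hB'
  have hAq : (A : ℝ) ≤ 2 * q - 1 := by exact_mod_cast hA'
  have hBq : (2 : ℝ) * q ≤ B := by exact_mod_cast hB'
  obtain ⟨t, ht, heq⟩ : -(π / 2) + q * (2 * π) ∈ ψ '' uIcc a b := by
    refine intermediate_value_uIcc hψ (Icc_subset_uIcc ?_)
    rw [hA, hB]
    constructor <;> nlinarith [pi_pos]
  have := hsin t ht
  rw [heq, sin_add_int_mul_two_pi, sin_neg, sin_pi_div_two] at this
  linarith

theorem ediv_two_eq_ediv_two_of_sin_nonneg {ψ : ℝ → ℝ} {a b : ℝ} {A B : ℤ}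
    (hψ : ContinuousOn ψ (uIcc a b)) (hsin : ∀ t ∈ uIcc a b, 0 ≤ sin (ψ t)) (hA : ψ a = A * π)
    (hB : ψ b = B * π) : A / 2 = B / 2 := by
  refine le_antisymm ?_ (ediv_two_le_ediv_two_of_sin_nonneg hψ hsin hA hB)
  rw [uIcc_comm] at hψ hsin
  exact ediv_two_le_ediv_two_of_sin_nonneg hψ hsin hB hA

theorem ediv_two_eq_add_card_odd {B : ℕ → ℤ} {n : ℕ}
    (hB : ∀ j < n, (B j + 1) / 2 = B (j + 1) / 2) :
    B n / 2 = B 0 / 2 + ({j ∈ Finset.range n | Odd (B j)} : Finset ℕ).card := by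
  induction n with
  | zero => simp
  | succ n ih =>
    have hn := hB n n.lt_succ_self
    have ih := ih fun j hj => hB j (hj.trans n.lt_succ_self)
    rw [Finset.range_add_one, Finset.filter_insert]
    split_ifs with hodd
    · rw [Finset.card_insert_of_notMem (by simp)]
      have := Int.odd_iff.1 hodd
      push_cast
      omega
    · have := Int.even_iff.1 (Int.not_odd_iff_even.1 hodd)
      omega

theorem IsCirclePartition.card_le_of_phase {ψ : ℝ → ℝ} {θ : ℕ → ℝ} {N : ℕ} {S : Finset ℕ}
    (hθ : IsCirclePartition θ (2 * N)) (hψ : Continuous ψ)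
    (hrot : ∀ t, ψ (t + 2 * π) = ψ t - 2 * π) (hzero : ∀ j ≤ 2 * N, sin (ψ (θ j)) = 0)
    (hsin : ∀ j < 2 * N, ∀ t ∈ Icc (θ j) (θ (j + 1)), 0 ≤ (-1) ^ (j + 1) * sin (ψ t))
    (hS : ∀ j ∈ S, j < 2 * N ∧ 0 ≤ (-1) ^ j * cos (ψ (θ j))) : S.card ≤ N + 1 := by
  have hmul (j : ℕ) : ∃ B : ℤ, j ≤ 2 * N → ψ (θ j) + j * π = B * π := by
    by_cases hj : j ≤ 2 * N
    · obtain ⟨A, hA⟩ := sin_eq_zero_iff.1 (hzero j hj)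
      exact ⟨A + j, fun _ => by push_cast; rw [← hA]; ring⟩
    · exact ⟨0, fun h => absurd h hj⟩
  choose B hB using hmul
  have hstep (j : ℕ) (hj : j < 2 * N) : (B j + 1) / 2 = B (j + 1) / 2 := by
    have hleft := hB j hj.le
    have hright := hB (j + 1) hj
    push_cast at hright
    refine ediv_two_eq_ediv_two_of_sin_nonneg (ψ := fun t => ψ t + (j + 1 : ℕ) * π) (a := θ j)
      (b := θ (j + 1)) (by fun_prop) (fun t ht => ?_) (by push_cast; linarith)
      (by push_cast; linarith)
    rw [uIcc_of_le (hθ.lt_succ hj).le] at ht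
    simpa only [sin_add_nat_mul_pi] using hsin j hj t ht
  have hlast : B (2 * N) = B 0 - 2 + 2 * N := by
    have h₀ := hB 0 (Nat.zero_le _)
    have h₁ := hB (2 * N) le_rfl
    rw [hθ.last_eq, hrot] at h₁
    push_cast at h₀ h₁
    have : (B (2 * N) : ℝ) = B 0 - 2 + 2 * N := mul_right_cancel₀ pi_ne_zero (by linarith)
    exact_mod_cast this
  have heven : S ⊆ {j ∈ Finset.range (2 * N) | ¬Odd (B j)} := fun j hj => by
    obtain ⟨hjN, hcos⟩ := hS j hj
    refine Finset.mem_filter.2 ⟨Finset.mem_range.2 hjN, fun hodd => ?_⟩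
    rw [← cos_add_nat_mul_pi, hB j hjN.le, cos_int_mul_pi, hodd.neg_one_zpow] at hcos
    linarith
  have hcount := ediv_two_eq_add_card_odd hstep
  have hsplit := Finset.card_filter_add_card_filter_not (s := Finset.range (2 * N))
    (fun j => Odd (B j))
  rw [Finset.card_range] at hsplit
  have := Finset.card_le_card heven
  omega

theorem neg_one_pow_mul_le_of_shortfall_eq_zero {g : ℝ → ℝ} {y : ℕ → ℝ} {m M : ℝ} {j : ℕ}
    (hM : M ∈ upperBounds (range g)) (hm : m ∈ lowerBounds (range g))
    (h : shortfall m M y j = 0) (u : ℝ) : (-1) ^ j * g u ≤ (-1) ^ j * y j := by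
  have hle := hM (mem_range_self u)
  have hge := hm (mem_range_self u)
  unfold shortfall at h
  split_ifs at h with hj
  · rw [hj.neg_one_pow]
    linarith
  · rw [(Nat.not_even_iff_odd.1 hj).neg_one_pow]
    linarith

theorem IsExtremalPartition.card_zerosBelow_le {g : ℝ → ℝ} {θ : ℕ → ℝ} {N : ℕ} {m : ℝ} {f : E2 → ℝ}
    (h : IsExtremalPartition g θ (2 * N)) (hper : Periodic g (2 * π)) (hm : IsLeast (range g) m)
    (hf : ContDiff ℝ 1 f) (hfg : ∀ t, f (sphPt t) = g t)
    (hcrit : ∀ x ∈ Metric.closedBall 0 1, fderiv ℝ f x ≠ 0) :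
    (zerosBelow (shortfall m (g (θ 0)) fun j => g (θ j)) (2 * N)).card ≤ N + 1 := by
  obtain ⟨ψ, r, hψ, hr, hrot, hsin, hcos⟩ := exists_phase_on_circle hf hcrit
  have hfd := hf.differentiable one_ne_zero
  have hg : Differentiable ℝ g :=
    funext hfg ▸ hfd.comp (contDiff_sphPt.differentiable (by simp))
  rw [funext hfg] at hsin
  refine h.toIsCirclePartition.card_le_of_phase hψ hrot (fun j hj => ?_) (fun j hj t ht => ?_)
    fun j hj => ?_
  · exact (mul_eq_zero.1 ((hsin _).symm.trans (h.deriv_eq_zero hper hj))).resolve_left (hr _).ne'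
  · have hnonneg := (h.strictMonoOn_arc hg.continuous hj).monotoneOn.derivWithin_nonneg (x := t)
    rw [((hg t).const_mul _).derivWithin (uniqueDiffOn_Icc (h.lt_succ hj) t ht),
      deriv_const_mul_field, hsin, mul_left_comm] at hnonneg
    exact nonneg_of_mul_nonneg_right hnonneg (hr t)
  · obtain ⟨hjN, hj₀⟩ := mem_zerosBelow.1 hj
    have hradial := mul_fderiv_sphPt_nonneg (c := (-1) ^ j) (t := θ j) hfd hcrit (by simp)
      fun u => by
        rw [hfg, hfg]
        exact neg_one_pow_mul_le_of_shortfall_eq_zero h.isGreatest.2 hm.2 hj₀ u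
    rw [hcos, mul_left_comm] at hradial
    exact ⟨hjN, nonneg_of_mul_nonneg_right hradial (hr _)⟩

end

/-- Let `φ : S¹ → ℝ` be C^∞ (encoded by the 2π-periodic smooth `g = φ ∘ (cos, sin)`), having
exactly `n` local extremum points on the circle (`n` finite and positive), of which exactly
`s` are absolute extrema. Then every smooth extension of `φ` has a critical point in the
closed unit disk iff `s > n/2 + 1` (equivalently, `n + 2 < 2s`). Coinciding critical values
of `φ` are allowed. -/
theorem stmt_16 (g : ℝ → ℝ) (hg : ContDiff ℝ (⊤ : ℕ∞) g)
    (hper : Function.Periodic g (2 * Real.pi)) (n s : ℕ) (hn : 0 < n)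
    (hT : {t ∈ Set.Ico (0 : ℝ) (2 * Real.pi) |
      IsLocalMax g t ∨ IsLocalMin g t}.encard = (n : ℕ∞))
    (hS : {t ∈ Set.Ico (0 : ℝ) (2 * Real.pi) |
      (∀ u : ℝ, g u ≤ g t) ∨ (∀ u : ℝ, g t ≤ g u)}.encard = (s : ℕ∞)) :
    (∀ f : E2 → ℝ, ContDiff ℝ (⊤ : ℕ∞) f → (∀ t : ℝ, f (sphPt t) = g t) →
      ∃ x ∈ Metric.closedBall (0 : E2) 1, fderiv ℝ f x = 0) ↔ n + 2 < 2 * s := by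
  simp only [or_comm (a := IsLocalMax g _)] at hT
  obtain ⟨θ, hθ⟩ := exists_isExtremalPartition hg.continuous hper hT
  obtain ⟨m, hm⟩ := exists_isLeast_range_of_periodic hg.continuous hper Real.two_pi_pos
  obtain ⟨N, rfl⟩ : ∃ N, n = 2 * (N + 1) := by
    obtain ⟨k, hk⟩ := (hθ.even hg.continuous hper).two_dvd
    exact ⟨k - 1, by omega⟩
  have hs := hθ.card_zerosBelow_shortfall hg.continuous hper hm
  rw [hS, Nat.cast_inj] at hs
  refine ⟨fun hext => ?_, fun hlt f hf hfg => ?_⟩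
  · by_contra! hle
    have hsparse := hθ.isSparselyExtremal hg.continuous hper hm (by omega)
    have hmono := fun j => hθ.strictMonoOn_arc (j := j) hg.continuous
    obtain ⟨v, ⟨F⟩⟩ := (hsparse.isRealizable
      (isZigzag_of_strictMonoOn hθ.toIsCirclePartition hmono)).exists_regularPolarExtension
        hg hper hθ.toIsCirclePartition hmono
    obtain ⟨f, hf, hfg, hcrit⟩ := F.exists_extension_fderiv_ne_zero
    obtain ⟨x, hx, hx₀⟩ := hext f hf hfg
    exact hcrit x hx hx₀
  · by_contra! hcrit
    have := hθ.card_zerosBelow_le hper hm (hf.of_le (by simp)) hfg hcrit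
    omega
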